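/- arXiv:0801.0711 — 6 statements merged into one kernel-verified Lean document; each statement's English description precedes it below -/
import Mathlib

section
/- For every integer k ≥ 1 one has the identity f_k = (1/(k·(−2)^{k−1}))·Σ_{q=0}^{⌊k/2⌋} (−1)^q·C(k,2q)·t^{k−2q}·u^q in ℚ[s,t], where u := 4s − t². -/
open MvPolynomial

/-- The variable `s` (weight 2). -/
noncomputable def s : MvPolynomial (Fin 2) ℚ := X 0
/-- The variable `t` (weight 1). -/
noncomputable def t : MvPolynomial (Fin 2) ℚ := X 1
/-- `u := 4s - t²`. -/
noncomputable def u : MvPolynomial (Fin 2) ℚ := C 4 * s - t ^ 2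

/-- `f k` is the weighted-degree-`k` homogeneous part of `log (1+s+t)`, where `s` has
weight 2 and `t` weight 1:
`f k = ∑_{2a+b = k, a+b ≥ 1} ((-1)^(a+b-1)/(a+b)) ⬝ C(a+b,a) ⬝ s^a t^b`. -/
noncomputable def f (k : ℕ) : MvPolynomial (Fin 2) ℚ :=
  ∑ a ∈ Finset.range (k / 2 + 1),
    C (((-1 : ℚ) ^ (k - a - 1) / (k - a : ℚ)) * ((k - a).choose a : ℚ)) *
      s ^ a * t ^ (k - 2 * a)

/-! Factor `1 + t z + s z ^ 2 = (1 + α z) * (1 + β z)`. Up to the factor `(-1) ^ (k - 1) / k`, the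
polynomial `f k` is the power sum `α ^ k + β ^ k`, which is the Dickson polynomial of `α + β = t`
with parameter `α * β = s`. Waring's formula expands it in powers of `s` and `t`, giving `f k` as
defined. The binomial theorem applied to `2 * α, 2 * β = t ± √(t ^ 2 - 4 * s)` expands it in powers
of `t` and `t ^ 2 - 4 * s = -u`, giving the other side. -/

open Polynomial (dickson)

section PowerSums

variable {R : Type*} [CommRing R]

theorem add_pow_add_sub_pow (x y : R) (n : ℕ) :
    (x + y) ^ n + (x - y) ^ n =
      2 * ∑ q ∈ Finset.range (n / 2 + 1),
        (n.choose (2 * q) : R) * x ^ (n - 2 * q) * (y ^ 2) ^ q := by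
  have expand : (x + y) ^ n + (x - y) ^ n =
      ∑ m ∈ Finset.range (n + 1), (y ^ m + (-y) ^ m) * x ^ (n - m) * (n.choose m : R) := by
    rw [add_comm x y, sub_eq_neg_add, add_pow, add_pow, ← Finset.sum_add_distrib]
    simp only [add_mul]
  have odd_term {m : ℕ} (hm : Odd m) :
      (y ^ m + (-y) ^ m) * x ^ (n - m) * (n.choose m : R) = 0 := by
    rw [hm.neg_pow, add_neg_cancel, zero_mul, zero_mul]
  have even_term (q : ℕ) : 2 * ((n.choose (2 * q) : R) * x ^ (n - 2 * q) * (y ^ 2) ^ q) =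
      (y ^ (2 * q) + (-y) ^ (2 * q)) * x ^ (n - 2 * q) * (n.choose (2 * q) : R) := by
    rw [(even_two_mul q).neg_pow, pow_mul]
    ring
  rw [expand, Finset.mul_sum]
  symm
  refine Finset.sum_of_injOn (2 * ·) (mul_right_injective₀ two_ne_zero).injOn ?_ ?_
    fun q _ ↦ even_term q
  · intro q hq
    simp only [Finset.coe_range, Set.mem_Iio] at hq ⊢
    omega
  · intro m hm m_notMem
    refine odd_term (Nat.not_even_iff_odd.mp fun m_even ↦ m_notMem ?_)
    obtain ⟨q, rfl⟩ := even_iff_exists_two_mul.mp m_even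
    refine ⟨q, ?_, rfl⟩
    simp only [Finset.mem_range, Finset.coe_range, Set.mem_Iio] at hm ⊢
    omega

theorem dickson_eval_add_two (k : ℕ) (a x : R) (n : ℕ) :
    (dickson k a (n + 2)).eval x =
      x * (dickson k a (n + 1)).eval x - a * (dickson k a n).eval x := by
  rw [Polynomial.dickson_add_two, Polynomial.eval_sub, Polynomial.eval_mul, Polynomial.eval_mul,
    Polynomial.eval_X, Polynomial.eval_C]

theorem dickson_one_eval_add (x y : R) (n : ℕ) :
    (dickson 1 (x * y) n).eval (x + y) = x ^ n + y ^ n := by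
  induction n using Nat.twoStepInduction with
  | zero => norm_num
  | one => simp
  | more n ih₀ ih₁ =>
    rw [dickson_eval_add_two, ih₀, ih₁]
    ring

theorem dickson_one_eval_mul (c a x : R) (n : ℕ) :
    (dickson 1 (c ^ 2 * a) n).eval (c * x) = c ^ n * (dickson 1 a n).eval x := by
  induction n using Nat.twoStepInduction with
  | zero => norm_num
  | one => simp
  | more n ih₀ ih₁ =>
    rw [dickson_eval_add_two, dickson_eval_add_two, ih₀, ih₁]
    ring

theorem two_pow_mul_dickson_one_eval_of_sq_eq {a x y : R} (h : y ^ 2 = x ^ 2 - 4 * a) (n : ℕ) :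
    2 ^ n * (dickson 1 a n).eval x = (x + y) ^ n + (x - y) ^ n := by
  have sum_eq : 2 * x = (x + y) + (x - y) := by ring
  have prod_eq : 2 ^ 2 * a = (x + y) * (x - y) := by linear_combination h
  rw [← dickson_one_eval_mul, sum_eq, prod_eq, dickson_one_eval_add]

open QuadraticAlgebra in
theorem two_pow_mul_dickson_one_eval (a x : R) (n : ℕ) :
    2 ^ n * (dickson 1 a n).eval x =
      2 * ∑ q ∈ Finset.range (n / 2 + 1),
        (n.choose (2 * q) : R) * x ^ (n - 2 * q) * (x ^ 2 - 4 * a) ^ q := by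
  -- The identity is checked in the extension of `R` by a square root `ω` of `x ^ 2 - 4 * a`.
  let φ := algebraMap R (QuadraticAlgebra R (x ^ 2 - 4 * a) 0)
  have omega_sq : ω ^ 2 = φ x ^ 2 - 4 * φ a := by
    rw [pow_two ω, omega_mul_omega_eq_algebraMap, map_zero, zero_mul, add_zero, map_sub, map_mul,
      map_pow, map_ofNat]
  apply (algebraMap_injective : Function.Injective φ)
  calc φ (2 ^ n * (dickson 1 a n).eval x)
      = 2 ^ n * (dickson 1 (φ a) n).eval (φ x) := by
        rw [← Polynomial.map_dickson φ, Polynomial.eval_map_apply, map_mul, map_pow, map_ofNat]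
    _ = (φ x + ω) ^ n + (φ x - ω) ^ n := two_pow_mul_dickson_one_eval_of_sq_eq omega_sq n
    _ = _ := by
        rw [add_pow_add_sub_pow, omega_sq]
        simp only [map_mul, map_sub, map_sum, map_pow, map_natCast, map_ofNat, φ]

end PowerSums

section Waring

/-- The coefficient of `(-a) ^ i * x ^ (n - 2 * i)` in Waring's expansion of the Dickson polynomial
of the first kind `dickson 1 a n` for `n ≠ 0`. The value `waringCoeff 0 0 = 0 / 0 = 0` is junk. -/
def waringCoeff (n i : ℕ) : ℚ := n / (n - i) * (n - i).choose i

theorem waringCoeff_zero_right {n : ℕ} (hn : n ≠ 0) : waringCoeff n 0 = 1 := by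
  simp [waringCoeff, hn]

theorem waringCoeff_eq_zero_of_lt {n i : ℕ} (h : n < 2 * i) : waringCoeff n i = 0 := by
  rw [waringCoeff, Nat.choose_eq_zero_of_lt (by omega), Nat.cast_zero, mul_zero]

theorem waringCoeff_add_left (i m : ℕ) :
    waringCoeff (i + m) i = (i + m) / m * m.choose i := by
  rw [waringCoeff, Nat.add_sub_cancel_left, Nat.cast_add, add_sub_cancel_left]

theorem waringCoeff_add_two {n i : ℕ} (hn : n ≠ 0) (hi : 2 * i ≤ n) :
    waringCoeff (n + 2) (i + 1) = waringCoeff (n + 1) (i + 1) + waringCoeff n i := by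
  obtain ⟨m, rfl⟩ := Nat.exists_eq_add_of_le hi
  have i_add_m_ne : (i + m : ℚ) ≠ 0 := by norm_cast; omega
  have choose_diag :
      ((i + m + 1).choose (i + 1) : ℚ) = (i + m + 1) * (i + m).choose i / (i + 1) :=
    eq_div_of_mul_eq (by positivity) (mod_cast (Nat.add_one_mul_choose_eq (i + m) i).symm)
  have choose_row : ((i + m).choose (i + 1) : ℚ) = (i + m).choose i * m / (i + 1) := by
    have h := Nat.choose_succ_right_eq (i + m) i
    rw [Nat.add_sub_cancel_left] at h
    exact eq_div_of_mul_eq (by positivity) (mod_cast h)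
  rw [show 2 * i + m + 2 = (i + 1) + (i + m + 1) by ring,
    show 2 * i + m + 1 = (i + 1) + (i + m) by ring, show 2 * i + m = i + (i + m) by ring,
    waringCoeff_add_left, waringCoeff_add_left, waringCoeff_add_left, choose_diag, choose_row]
  push_cast
  field_simp
  ring

theorem neg_one_pow_div_mul_choose_eq_waringCoeff {n i : ℕ} (hn : n ≠ 0) (hi : 2 * i ≤ n) :
    (-1 : ℚ) ^ (n - i - 1) / (n - i) * (n - i).choose i =
      (-1) ^ (n - 1) / n * (waringCoeff n i * (-1) ^ i) := by
  have sign : (-1 : ℚ) ^ (n - i - 1) = (-1) ^ (n - 1) * (-1) ^ i := by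
    rw [show n - 1 = n - i - 1 + i by omega, pow_add, mul_assoc, ← mul_pow]
    simp
  rw [sign, waringCoeff]
  field_simp

variable {R : Type*} [CommRing R] [Algebra ℚ R]

/-- The `i`-th term of Waring's expansion of the value at `x` of the Dickson polynomial
`dickson 1 a n`, for `n ≠ 0`. The exponent `n - 2 * i` is truncated, but only where `waringCoeff`
vanishes. -/
def waringTerm (a x : R) (n i : ℕ) : R :=
  algebraMap ℚ R (waringCoeff n i) * (-a) ^ i * x ^ (n - 2 * i)

theorem waringTerm_zero_right (a x : R) {n : ℕ} (hn : n ≠ 0) : waringTerm a x n 0 = x ^ n := by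
  simp [waringTerm, waringCoeff_zero_right hn]

theorem waringTerm_eq_zero_of_lt (a x : R) {n i : ℕ} (h : n < 2 * i) : waringTerm a x n i = 0 := by
  rw [waringTerm, waringCoeff_eq_zero_of_lt h, map_zero, zero_mul, zero_mul]

theorem waringTerm_add_two (a x : R) {n i : ℕ} (hn : n ≠ 0) (hi : 2 * i ≤ n) :
    waringTerm a x (n + 2) (i + 1) =
      x * waringTerm a x (n + 1) (i + 1) - a * waringTerm a x n i := by
  rw [waringTerm, waringCoeff_add_two hn hi, show n + 2 - 2 * (i + 1) = n - 2 * i by omega, map_add]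
  obtain hlt | heq := hi.lt_or_eq
  · rw [waringTerm, waringTerm, show n - 2 * i = n + 1 - 2 * (i + 1) + 1 by omega]
    ring
  · have h : n + 1 < 2 * (i + 1) := by omega
    rw [waringTerm_eq_zero_of_lt a x h, waringCoeff_eq_zero_of_lt h, map_zero, waringTerm]
    ring

theorem sum_range_waringTerm_eq_of_le (a x : R) {n N : ℕ} (h : n / 2 + 1 ≤ N) :
    ∑ i ∈ Finset.range (n / 2 + 1), waringTerm a x n i =
      ∑ i ∈ Finset.range N, waringTerm a x n i := by
  refine Finset.sum_subset (Finset.range_mono h) fun i _ hi ↦ waringTerm_eq_zero_of_lt a x ?_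
  rw [Finset.mem_range] at hi
  omega

theorem sum_waringTerm_add_two (a x : R) {n : ℕ} (hn : n ≠ 0) :
    ∑ i ∈ Finset.range ((n + 2) / 2 + 1), waringTerm a x (n + 2) i =
      x * ∑ i ∈ Finset.range ((n + 1) / 2 + 1), waringTerm a x (n + 1) i -
        a * ∑ i ∈ Finset.range (n / 2 + 1), waringTerm a x n i := by
  have terms : ∑ i ∈ Finset.range (n / 2 + 1), waringTerm a x (n + 2) (i + 1) =
      ∑ i ∈ Finset.range (n / 2 + 1),
        (x * waringTerm a x (n + 1) (i + 1) - a * waringTerm a x n i) :=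
    Finset.sum_congr rfl fun i hi ↦ waringTerm_add_two a x hn <| by
      rw [Finset.mem_range] at hi
      omega
  rw [sum_range_waringTerm_eq_of_le a x (show (n + 1) / 2 + 1 ≤ n / 2 + 1 + 1 by omega),
    show (n + 2) / 2 + 1 = n / 2 + 1 + 1 by omega, Finset.sum_range_succ' _ (n / 2 + 1),
    Finset.sum_range_succ' _ (n / 2 + 1), terms, Finset.sum_sub_distrib, ← Finset.mul_sum,
    ← Finset.mul_sum, waringTerm_zero_right a x (by omega), waringTerm_zero_right a x (by omega)]
  ring

theorem dickson_one_eval_eq_sum_waringTerm (a x : R) {n : ℕ} (hn : n ≠ 0) :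
    (dickson 1 a n).eval x = ∑ i ∈ Finset.range (n / 2 + 1), waringTerm a x n i := by
  induction n using Nat.twoStepInduction with
  | zero => contradiction
  | one => simp [waringTerm_zero_right]
  | more n ih₀ ih₁ =>
    rcases eq_or_ne n 0 with rfl | hn
    · norm_num [Polynomial.dickson_two, waringTerm, waringCoeff, Finset.sum_range_succ, map_ofNat]
      ring
    · rw [dickson_eval_add_two, ih₀ hn, ih₁ n.succ_ne_zero, sum_waringTerm_add_two a x hn]

theorem sum_neg_one_pow_div_mul_choose_eq_dickson_one_eval (a x : R) {n : ℕ} (hn : n ≠ 0) :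
    ∑ i ∈ Finset.range (n / 2 + 1),
        algebraMap ℚ R ((-1) ^ (n - i - 1) / (n - i) * (n - i).choose i) * a ^ i *
          x ^ (n - 2 * i) =
      algebraMap ℚ R ((-1) ^ (n - 1) / n) * (dickson 1 a n).eval x := by
  rw [dickson_one_eval_eq_sum_waringTerm a x hn, Finset.mul_sum]
  refine Finset.sum_congr rfl fun i hi ↦ ?_
  have two_mul_le : 2 * i ≤ n := by
    rw [Finset.mem_range] at hi
    omega
  rw [neg_one_pow_div_mul_choose_eq_waringCoeff hn two_mul_le, waringTerm, neg_pow a]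
  simp only [map_mul, map_pow, map_neg, map_one]
  ring

theorem stmt1_general (x y : R) {k : ℕ} (hk : 1 ≤ k) :
    ∑ a ∈ Finset.range (k / 2 + 1),
        algebraMap ℚ R ((-1) ^ (k - a - 1) / (k - a) * (k - a).choose a) * x ^ a *
          y ^ (k - 2 * a) =
      algebraMap ℚ R (1 / (k * (-2) ^ (k - 1))) *
        ∑ q ∈ Finset.range (k / 2 + 1),
          algebraMap ℚ R ((-1) ^ q * k.choose (2 * q)) * y ^ (k - 2 * q) *
            (4 * x - y ^ 2) ^ q := by
  have hk₀ : k ≠ 0 := Nat.one_le_iff_ne_zero.mp hk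
  have binomial_sum : 2 * ∑ q ∈ Finset.range (k / 2 + 1),
      algebraMap ℚ R ((-1) ^ q * k.choose (2 * q)) * y ^ (k - 2 * q) * (4 * x - y ^ 2) ^ q =
        2 ^ k * (dickson 1 x k).eval y := by
    rw [two_pow_mul_dickson_one_eval]
    congr 1
    refine Finset.sum_congr rfl fun q _ ↦ ?_
    rw [← neg_sub (4 * x), neg_pow (4 * x - y ^ 2)]
    simp only [map_mul, map_pow, map_neg, map_one, map_natCast]
    ring
  have scalar : (1 / (k * (-2) ^ (k - 1)) : ℚ) = (-1) ^ (k - 1) / k / 2 ^ k * 2 := by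
    rw [neg_pow, ← pow_sub_one_mul hk₀ 2]
    field_simp
    rw [pow_right_comm, neg_one_sq, one_pow]
  rw [sum_neg_one_pow_div_mul_choose_eq_dickson_one_eval x y hk₀, scalar, map_mul, map_ofNat,
    mul_assoc, binomial_sum, ← mul_assoc, ← map_ofNat (algebraMap ℚ R) 2, ← map_pow, ← map_mul,
    div_mul_cancel₀ _ (by positivity)]

end Waring

theorem stmt1 (k : ℕ) (hk : 1 ≤ k) :
    f k = C (1 / ((k : ℚ) * (-2 : ℚ) ^ (k - 1))) *
      ∑ q ∈ Finset.range (k / 2 + 1),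
        C ((-1 : ℚ) ^ q * (k.choose (2 * q) : ℚ)) * t ^ (k - 2 * q) * u ^ q := by
  rw [u, show (C 4 : MvPolynomial (Fin 2) ℚ) = 4 from map_ofNat C 4]
  exact stmt1_general s t hk
end

section
/- For every integer k ≥ 1, ι(G_{2k}) = (−1)^k·G_{2k} in ℚ[t,v]. -/
open MvPolynomial

/-- In `ℚ[t,v]` (with `t = X 0`, `v = X 1`), `G k` is obtained from `f k` by substituting
`s = (t² + v²)/4` and keeping `t`. -/
noncomputable def G (k : ℕ) : MvPolynomial (Fin 2) ℚ :=
  aeval ![C (1/4 : ℚ) * ((X 0) ^ 2 + (X 1) ^ 2), X 0] (f k)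

/-- The `ℚ`-algebra endomorphism `ι` of `ℚ[t,v]` with `ι t = -v`, `ι v = t`. -/
noncomputable def iota : MvPolynomial (Fin 2) ℚ →ₐ[ℚ] MvPolynomial (Fin 2) ℚ :=
  aeval ![-(X 1), X 0]

/-!
By construction `f k (a, b)` is the coefficient of `X ^ k` in `log (1 + b X + a X²)`. Taking
logarithms in `(1 + b X + a X²) (1 - b X + a X²) = 1 + (2 a - b²) X² + a² X⁴` gives the duplication
formula `2 f (2 k) (a, b) = f k (a², 2 a - b²)`. At `a = (t² + v²) / 4` and `b = t`, the map `ι`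
fixes `a` and negates `2 a - b² = (v² - t²) / 2`, and negating the weight-one variable multiplies
`f k` by `(-1) ^ k`.
-/

open scoped PowerSeries

section LogOf

open PowerSeries (HasSubst derivative log logOf logOf_eq)

lemma hasSubst_sub_one {R : Type*} [CommRing R] {F : R⟦X⟧} (hF : F.constantCoeff = 1) :
    HasSubst (F - 1) :=
  .of_constantCoeff_zero' (by rw [map_sub, hF, map_one, sub_self])

variable {A : Type*} [CommRing A] [Algebra ℚ A]

lemma one_add_X_mul_derivative_log : (1 + .X) * derivative A (log A) = 1 := by
  rw [PowerSeries.deriv_log]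
  ext n
  cases n <;> simp [add_mul, pow_succ, PowerSeries.coeff_one]

lemma mul_derivative_logOf {F : A⟦X⟧} (hF : F.constantCoeff = 1) :
    F * derivative A (logOf F) = derivative A F := by
  have hS := hasSubst_sub_one hF
  have hinv : F * (derivative A (log A)).subst (F - 1) = 1 := by
    simpa [← PowerSeries.coe_substAlgHom hS, PowerSeries.substAlgHom_X] using
      congrArg (PowerSeries.substAlgHom (R := A) hS) one_add_X_mul_derivative_log
  rw [logOf_eq, PowerSeries.derivative_subst hS, ← mul_assoc, hinv, one_mul, map_sub,
    PowerSeries.derivative_one, sub_zero]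

theorem logOf_mul {F H : A⟦X⟧} (hF : F.constantCoeff = 1) (hH : H.constantCoeff = 1) :
    logOf (F * H) = logOf F + logOf H := by
  have hFH : (F * H).constantCoeff = 1 := by rw [map_mul, hF, hH, one_mul]
  have hunit : IsUnit (F * H) := by
    rw [PowerSeries.isUnit_iff_constantCoeff, hFH]
    exact isUnit_one
  have : IsAddTorsionFree A := .of_module_rat A
  refine derivative.ext (hunit.mul_left_cancel ?_) ?_
  · calc F * H * derivative A (logOf (F * H))
        = F * derivative A H + H * derivative A F := by
          rw [mul_derivative_logOf hFH, Derivation.leibniz, smul_eq_mul, smul_eq_mul]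
      _ = F * H * derivative A (logOf F + logOf H) := by
          rw [← mul_derivative_logOf hF, ← mul_derivative_logOf hH, map_add]
          ring
  · rw [map_add, PowerSeries.constantCoeff_logOf hFH, PowerSeries.constantCoeff_logOf hF,
      PowerSeries.constantCoeff_logOf hH, add_zero]

lemma expand_logOf {p : ℕ} (hp : p ≠ 0) {F : A⟦X⟧} (hF : F.constantCoeff = 1) :
    (logOf F).expand p hp = logOf (F.expand p hp) := by
  calc (logOf F).expand p hp = (log A).subst ((F - 1).expand p hp) :=
        PowerSeries.expand_subst p hp (hasSubst_sub_one hF) _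
    _ = logOf (F.expand p hp) := by rw [map_sub, map_one, logOf_eq]

end LogOf

section Coeff

lemma coeff_C_mul_X_add_C_pow {R : Type*} [CommSemiring R] (a b : R) (n m : ℕ) :
    ((.C a * .X + .C b : R⟦X⟧) ^ n).coeff m = a ^ m * b ^ (n - m) * n.choose m := by
  have hterm (i : ℕ) : (.C a * .X : R⟦X⟧) ^ i * .C b ^ (n - i) * n.choose i =
      .C (a ^ i * b ^ (n - i) * n.choose i) * .X ^ i := by
    simp only [map_mul, map_pow, map_natCast]
    ring
  simp only [add_pow, hterm, map_sum, PowerSeries.coeff_C_mul_X_pow, Finset.sum_ite_eq,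
    Finset.mem_range]
  refine ite_eq_left_iff.2 fun hmn ↦ ?_
  rw [Nat.choose_eq_zero_of_lt (by omega), Nat.cast_zero, mul_zero]

lemma coeff_subst_X_mul {R : Type*} [CommRing R] (F H : R⟦X⟧) (k : ℕ) :
    PowerSeries.coeff k (F.subst (.X * H : R⟦X⟧)) =
      ∑ i ∈ Finset.range (k + 1), F.coeff (k - i) * (H ^ (k - i)).coeff i := by
  have hcoeff (n : ℕ) : ((.X * H : R⟦X⟧) ^ n).coeff k =
      if n ≤ k then (H ^ n).coeff (k - n) else 0 := by
    rw [mul_pow, PowerSeries.coeff_X_pow_mul']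
  rw [PowerSeries.coeff_subst' (.of_constantCoeff_zero' (by simp)),
    finsum_eq_sum_of_support_subset (s := Finset.range (k + 1)), ← Finset.sum_range_reflect]
  · refine Finset.sum_congr rfl fun i hi ↦ ?_
    have hik : i ≤ k := Nat.lt_succ_iff.1 (Finset.mem_range.1 hi)
    rw [hcoeff, Nat.add_sub_cancel, if_pos (Nat.sub_le k i), Nat.sub_sub_self hik, smul_eq_mul]
  · intro n hn
    by_contra hnk
    have hkn : ¬ n ≤ k := by simpa [Nat.lt_succ_iff] using hnk
    exact hn (by simp only [hcoeff, if_neg hkn, smul_zero])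

end Coeff

section Quadratic

/-- The power series `1 + b X + a X²`: it is `1 + s + t` at `s = a`, `t = b`, with the grading that
gives `s` weight 2 and `t` weight 1 recorded by the exponent of `X`. -/
noncomputable def quadraticSeries {R : Type*} [CommSemiring R] (a b : R) : R⟦X⟧ :=
  1 + .C b * .X + .C a * .X ^ 2

lemma constantCoeff_quadraticSeries {R : Type*} [CommSemiring R] (a b : R) :
    (quadraticSeries a b).constantCoeff = 1 := by
  simp [quadraticSeries]

lemma quadraticSeries_mul_neg {R : Type*} [CommRing R] (a b : R) :
    quadraticSeries a b * quadraticSeries a (-b) =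
      (quadraticSeries (a ^ 2) (2 * a - b ^ 2)).expand 2 two_ne_zero := by
  simp only [quadraticSeries, map_add, map_one, map_mul, map_sub, map_neg, map_pow, map_ofNat,
    PowerSeries.expand_C, PowerSeries.expand_X]
  ring

variable {A : Type*} [CommRing A] [Algebra ℚ A]

lemma aeval_f (a b : A) (k : ℕ) : aeval ![a, b] (f k) =
    ∑ i ∈ Finset.range (k / 2 + 1), algebraMap ℚ A
      ((-1) ^ (k - i - 1) / (k - i : ℚ) * (k - i).choose i) * a ^ i * b ^ (k - 2 * i) := by
  simp only [f, s, t, map_sum, map_mul (aeval _), map_pow (aeval _), aeval_X, aeval_C,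
    Matrix.cons_val_zero, Matrix.cons_val_one]

lemma aeval_f_neg (a b : A) (k : ℕ) :
    aeval ![a, -b] (f k) = (-1) ^ k * aeval ![a, b] (f k) := by
  rw [aeval_f, aeval_f, Finset.mul_sum]
  refine Finset.sum_congr rfl fun i hi ↦ ?_
  have hik : 2 * i ≤ k := by grind
  have hsign : (-1 : A) ^ k = (-1) ^ (k - 2 * i) := by
    conv_lhs => rw [← Nat.add_sub_cancel' hik, pow_add, pow_mul, neg_one_sq, one_pow, one_mul]
  rw [neg_pow b, hsign]
  ring

theorem coeff_logOf_quadraticSeries (a b : A) (k : ℕ) :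
    (quadraticSeries a b).logOf.coeff k = aeval ![a, b] (f k) := by
  have hquad : quadraticSeries a b - 1 = .X * (.C a * .X + .C b) := by
    rw [quadraticSeries]
    ring
  rw [PowerSeries.logOf_eq, hquad, coeff_subst_X_mul, aeval_f]
  symm
  refine Finset.sum_subset_zero_on_sdiff (Finset.range_subset_range.2 (by omega)) ?_ ?_
  · intro i hi
    have hki : k - i < i := by grind
    rw [coeff_C_mul_X_add_C_pow, Nat.choose_eq_zero_of_lt hki, Nat.cast_zero, mul_zero, mul_zero]
  · intro i hi
    have hik : 2 * i ≤ k := by grind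
    have hlog : (PowerSeries.log A).coeff (k - i) =
        algebraMap ℚ A ((-1) ^ (k - i - 1) / (k - i : ℚ)) := by
      rw [PowerSeries.coeff_log, ← Nat.cast_sub (by omega)]
      split_ifs with hzero
      · -- Here `k = i = 0`, and the division by zero in `f 0` returns the constant term 0 of `log`.
        rw [hzero, Nat.cast_zero, div_zero, map_zero]
      · rw [show k - i + 1 = k - i - 1 + 2 by omega, pow_add, neg_one_sq, mul_one]
    rw [coeff_C_mul_X_add_C_pow, hlog, show k - i - i = k - 2 * i by omega, map_mul, map_natCast]
    ring

theorem two_mul_aeval_f_two_mul (a b : A) (k : ℕ) :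
    2 * aeval ![a, b] (f (2 * k)) = aeval ![a ^ 2, 2 * a - b ^ 2] (f k) := by
  calc 2 * aeval ![a, b] (f (2 * k))
      = ((quadraticSeries a b).logOf + (quadraticSeries a (-b)).logOf).coeff (2 * k) := by
        rw [map_add, coeff_logOf_quadraticSeries, coeff_logOf_quadraticSeries, aeval_f_neg,
          (even_two_mul k).neg_one_pow, one_mul, two_mul]
    _ = ((quadraticSeries (a ^ 2) (2 * a - b ^ 2)).logOf.expand 2 two_ne_zero).coeff (2 * k) := by
        rw [← logOf_mul (constantCoeff_quadraticSeries _ _) (constantCoeff_quadraticSeries _ _),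
          quadraticSeries_mul_neg, expand_logOf _ (constantCoeff_quadraticSeries _ _)]
    _ = aeval ![a ^ 2, 2 * a - b ^ 2] (f k) := by
        rw [PowerSeries.coeff_expand_mul, coeff_logOf_quadraticSeries]

theorem map_aeval_f_two_mul (φ : A →ₐ[ℚ] A) {a b : A} (ha : φ a = a)
    (hb : φ b ^ 2 = 4 * a - b ^ 2) (k : ℕ) :
    φ (aeval ![a, b] (f (2 * k))) = (-1) ^ k * aeval ![a, b] (f (2 * k)) := by
  have hneg : 2 * a - φ b ^ 2 = -(2 * a - b ^ 2) := by linear_combination -hb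
  have htwo : IsUnit (2 : A) :=
    map_ofNat (algebraMap ℚ A) 2 ▸ (IsUnit.mk0 (2 : ℚ) two_ne_zero).map (algebraMap ℚ A)
  refine htwo.mul_left_cancel ?_
  calc 2 * φ (aeval ![a, b] (f (2 * k)))
      = 2 * aeval ![a, φ b] (f (2 * k)) := by
        simp only [aeval_f, map_sum, map_mul, map_pow, AlgHom.commutes, ha]
    _ = aeval ![a ^ 2, -(2 * a - b ^ 2)] (f k) := by rw [two_mul_aeval_f_two_mul, hneg]
    _ = 2 * ((-1) ^ k * aeval ![a, b] (f (2 * k))) := by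
        rw [aeval_f_neg, ← two_mul_aeval_f_two_mul, mul_left_comm]

end Quadratic

theorem stmt2 (k : ℕ) (hk : 1 ≤ k) :
    iota (G (2 * k)) = C ((-1 : ℚ) ^ k) * G (2 * k) := by
  have ht : iota (X 0) = -X 1 := by simp [iota]
  have hv : iota (X 1) = X 0 := by simp [iota]
  have hs : iota (C (1 / 4) * (X 0 ^ 2 + X 1 ^ 2)) = C (1 / 4) * (X 0 ^ 2 + X 1 ^ 2) := by
    rw [map_mul, map_add, map_pow, map_pow, ht, hv, ← algebraMap_eq, AlgHom.commutes]
    ring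
  have hfour : (4 : MvPolynomial (Fin 2) ℚ) * C (1 / 4) = 1 := by
    rw [← map_ofNat C 4, ← C_mul]
    norm_num
  have ht_sq : iota (X 0) ^ 2 = 4 * (C (1 / 4) * (X 0 ^ 2 + X 1 ^ 2)) - X 0 ^ 2 := by
    rw [ht]
    linear_combination -(X 0 ^ 2 + X 1 ^ 2) * hfour
  rw [G, map_aeval_f_two_mul iota hs ht_sq, map_pow, map_neg, map_one]
end

section
/- Let p ≥ 1 and let f = Σ_{q=0}^{p} a_q·σ_{p,q} be a real linear combination of the elementary symmetric polynomials in x_1,…,x_p. Then f(x) ≥ 0 for all x in the cube [0,1]^p if and only if f(v) ≥ 0 for every vertex v ∈ {0,1}^p of the cube. -/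
open MvPolynomial

/-! A polynomial of degree at most one in each variable is recovered from its values at the vertices
of the cube by multilinear interpolation,
`f x = ∑ s, (∏ i ∈ s, x i) * (∏ i ∉ s, (1 - x i)) * f (𝟙_s)`,
and on the cube all the interpolation weights are nonnegative. Elementary symmetric polynomials, and
hence their linear combinations, have degree at most one in each variable.
-/

section Interpolation

variable {σ R : Type*} [Fintype σ] [DecidableEq σ]

/-- The weight of the vertex `𝟙_s` in the multilinear interpolation at `x` of a function given on
the vertices of the unit cube. The vertices are indexed by the finsets `s` of coordinates equal
to `1`. -/
def cubeWeight [CommRing R] (x : σ → R) (s : Finset σ) : R :=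
  (∏ i ∈ s, x i) * ∏ i ∈ sᶜ, (1 - x i)

theorem cubeWeight_nonneg [CommRing R] [PartialOrder R] [IsOrderedRing R] {x : σ → R}
    (hx : ∀ i, 0 ≤ x i ∧ x i ≤ 1) (s : Finset σ) : 0 ≤ cubeWeight x s :=
  mul_nonneg (Finset.prod_nonneg fun i _ => (hx i).1)
    (Finset.prod_nonneg fun i _ => sub_nonneg.2 (hx i).2)

theorem prod_indicator_one_pow [CommMonoidWithZero R] (s : Finset σ) (m : σ → ℕ) :
    ∏ i, (s : Set σ).indicator (1 : σ → R) i ^ m i = ∏ i ∈ sᶜ, 0 ^ m i := by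
  have on_s : ∏ i ∈ s, (s : Set σ).indicator (1 : σ → R) i ^ m i = 1 :=
    Finset.prod_eq_one fun i hi => by simp [hi]
  rw [← Finset.prod_mul_prod_compl s, on_s, one_mul]
  exact Finset.prod_congr rfl fun i hi => by simp [Finset.mem_compl.1 hi]

variable [CommRing R]

theorem prod_pow_eq_sum_cubeWeight (x : σ → R) {m : σ → ℕ} (hm : ∀ i, m i ≤ 1) :
    ∏ i, x i ^ m i =
      ∑ s, cubeWeight x s * ∏ i, (s : Set σ).indicator (1 : σ → R) i ^ m i := by
  have interpolate (i : σ) : x i ^ m i = x i + (1 - x i) * 0 ^ m i := by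
    rcases Nat.le_one_iff_eq_zero_or_eq_one.1 (hm i) with h | h <;> simp [h]
  calc ∏ i, x i ^ m i
      = ∏ i, (x i + (1 - x i) * 0 ^ m i) := Finset.prod_congr rfl fun i _ => interpolate i
    _ = ∑ s, (∏ i ∈ s, x i) * ∏ i ∈ sᶜ, (1 - x i) * 0 ^ m i := Fintype.prod_add _ _
    _ = ∑ s, cubeWeight x s * ∏ i, (s : Set σ).indicator (1 : σ → R) i ^ m i := by
      simp only [cubeWeight, prod_indicator_one_pow, Finset.prod_mul_distrib, mul_assoc]

theorem eval_eq_sum_cubeWeight {f : MvPolynomial σ R} (hf : f ∈ restrictDegree σ R 1)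
    (x : σ → R) :
    eval x f = ∑ s, cubeWeight x s * eval ((s : Set σ).indicator 1) f := by
  simp only [eval_eq', Finset.mul_sum]
  rw [Finset.sum_comm]
  refine Finset.sum_congr rfl fun m hm => ?_
  rw [prod_pow_eq_sum_cubeWeight x ((mem_restrictDegree σ f 1).1 hf m hm), Finset.mul_sum]
  exact Finset.sum_congr rfl fun s _ => mul_left_comm _ _ _

end Interpolation

theorem esymm_mem_restrictDegree_one (σ R : Type*) [Fintype σ] [CommSemiring R] (n : ℕ) :
    esymm σ R n ∈ restrictDegree σ R 1 := by
  classical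
  rw [esymm_eq_sum_monomial]
  refine Submodule.sum_mem _ fun t _ => (mem_restrictDegree σ _ 1).2 fun m hm i => ?_
  obtain rfl := Finset.mem_singleton.1 (support_monomial_subset hm)
  rw [Finsupp.finsetSum_apply]
  simp only [Finsupp.single_apply, Finset.sum_ite_eq']
  split_ifs <;> simp

theorem stmt5_general {σ R : Type*} [Finite σ] [CommRing R] [PartialOrder R] [IsOrderedRing R]
    {f : MvPolynomial σ R} (hf : f ∈ restrictDegree σ R 1) :
    (∀ x : σ → R, (∀ i, 0 ≤ x i ∧ x i ≤ 1) → 0 ≤ eval x f) ↔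
      ∀ v : σ → R, (∀ i, v i = 0 ∨ v i = 1) → 0 ≤ eval v f := by
  classical
  have := Fintype.ofFinite σ
  constructor
  · intro nonneg_cube v hv
    exact nonneg_cube v fun i => by rcases hv i with h | h <;> simp [h]
  · intro nonneg_vertices x hx
    rw [eval_eq_sum_cubeWeight hf x]
    exact Finset.sum_nonneg fun s _ => mul_nonneg (cubeWeight_nonneg hx s) <|
      nonneg_vertices _ fun i => Set.indicator_eq_zero_or_self (s : Set σ) 1 i

theorem stmt5 (p : ℕ) (hp : 1 ≤ p) (a : ℕ → ℝ) :
    (∀ x : Fin p → ℝ, (∀ i, 0 ≤ x i ∧ x i ≤ 1) →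
        0 ≤ ∑ q ∈ Finset.range (p + 1), a q * eval x (esymm (Fin p) ℝ q)) ↔
      (∀ v : Fin p → ℝ, (∀ i, v i = 0 ∨ v i = 1) →
        0 ≤ ∑ q ∈ Finset.range (p + 1), a q * eval v (esymm (Fin p) ℝ q)) := by
  simpa only [map_sum, smul_eval] using stmt5_general <| Submodule.sum_smul_mem _ a
    fun q (_ : q ∈ Finset.range (p + 1)) => esymm_mem_restrictDegree_one (Fin p) ℝ q
end

section
/- The linear maps L, Λ, H on M satisfy the commutation relations L∘Λ − Λ∘L = H, H∘L − L∘H = 2L, and H∘Λ − Λ∘H = −2Λ; consequently, sending the standard sl(2,ℝ)-generators X, Y, H (with [X,Y] = H, [H,X] = 2X, [H,Y] = −2Y) to L, Λ, H respectively defines a representation of sl(2,ℝ) on M. -/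
/-- Valid basis indices: pairs `(k,p)` of integers with `0 ≤ p` and `2p ≤ k`. -/
def Idx : Type := { x : ℤ × ℤ // 0 ≤ x.2 ∧ 2 * x.2 ≤ x.1 }

/-- The free real vector space on the basis `{e_{k,p} : 0 ≤ 2p ≤ k}`. -/
abbrev M : Type := Idx →₀ ℝ

/-- The basis vector `e_{k,p}`, with the convention that it is `0` for invalid indices. -/
noncomputable def e (k p : ℤ) : M :=
  if h : 0 ≤ p ∧ 2 * p ≤ k then Finsupp.single ⟨(k, p), h⟩ 1 else 0

/-- `L e_{k,p} = (k - 2p + 1) e_{k+1,p}`. -/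
noncomputable def opL : M →ₗ[ℝ] M :=
  Finsupp.lsum ℝ fun v => LinearMap.toSpanSingleton ℝ M
    (((v.1.1 - 2 * v.1.2 + 1 : ℤ) : ℝ) • e (v.1.1 + 1) v.1.2)

/-- `Λ e_{k,p} = (2n - 2p - k + 1) e_{k-1,p} + (k - 2p + 1) e_{k-1,p-1}`. -/
noncomputable def opLam (n : ℕ) : M →ₗ[ℝ] M :=
  Finsupp.lsum ℝ fun v => LinearMap.toSpanSingleton ℝ M
    ((((2 * (n : ℤ) - 2 * v.1.2 - v.1.1 + 1 : ℤ) : ℝ)) • e (v.1.1 - 1) v.1.2 +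
      (((v.1.1 - 2 * v.1.2 + 1 : ℤ) : ℝ)) • e (v.1.1 - 1) (v.1.2 - 1))

/-- `H e_{k,p} = (2k - 2n) e_{k,p}`. -/
noncomputable def opH (n : ℕ) : M →ₗ[ℝ] M :=
  Finsupp.lsum ℝ fun v => LinearMap.toSpanSingleton ℝ M
    (((2 * v.1.1 - 2 * (n : ℤ) : ℤ) : ℝ) • e v.1.1 v.1.2)

/-!
The commutators can be computed formally on symbols `e_{k,p}` indexed by all integers `k` and `p`:
`[H,L]` and `[H,Λ]` only record that `L` and `Λ` shift the eigenvalue of `H` by `2` and `-2`, and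
in `[L,Λ]` the terms in `e_{k,p-1}` cancel. The passage to `M` is legitimate because the
coefficients vanish at the boundary of the index region: at `k = 2p - 1`, where `e_{k,p} = 0`, the
vectors `e_{k+1,p}` and `e_{k-1,p-1}` can be nonzero, but both carry the coefficient
`k - 2p + 1 = 0`.
-/

section Commutators

open Module.End Submodule

variable {R V : Type*} [CommRing R] [AddCommGroup V] [Module R V]

theorem lie_eq_smul_of_apply_mem_eigenspace {ι : Type*} {v : ι → V} (hv : span R (Set.range v) = ⊤)
    {H T : Module.End R V} {μ : ι → R} {c : R} (hH : ∀ i, v i ∈ H.eigenspace (μ i))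
    (hT : ∀ i, T (v i) ∈ H.eigenspace (μ i + c)) : ⁅H, T⁆ = c • T := by
  refine LinearMap.ext_on_range hv fun i => ?_
  calc ⁅H, T⁆ (v i) = H (T (v i)) - T (H (v i)) := rfl
    _ = (μ i + c) • T (v i) - μ i • T (v i) := by
      rw [mem_eigenspace_iff.mp (hT i), mem_eigenspace_iff.mp (hH i), map_smul]
    _ = c • T (v i) := by module

variable {τ : ℤ → ℤ → V} {N : R} {L Λ H : Module.End R V}

theorem lie_raising_lowering_eq_grading
    (hτ : span R (Set.range (Function.uncurry τ)) = ⊤)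
    (hL : ∀ k p : ℤ, L (τ k p) = (k - 2 * p + 1 : R) • τ (k + 1) p)
    (hΛ : ∀ k p : ℤ, Λ (τ k p) =
      (2 * N - 2 * p - k + 1) • τ (k - 1) p + (k - 2 * p + 1 : R) • τ (k - 1) (p - 1))
    (hH : ∀ k p : ℤ, H (τ k p) = (2 * k - 2 * N) • τ k p) : ⁅L, Λ⁆ = H := by
  refine LinearMap.ext_on_range hτ fun ⟨k, p⟩ => ?_
  have hLΛ : L (Λ (τ k p)) = ((2 * N - 2 * p - k + 1) * (k - 2 * p)) • τ k p +
      ((k - 2 * p + 1) * (k - 2 * p + 2) : R) • τ k (p - 1) := by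
    simp only [hΛ, hL, map_add, map_smul, sub_add_cancel]
    push_cast
    module
  have hΛL : Λ (L (τ k p)) = ((k - 2 * p + 1) * (2 * N - 2 * p - k)) • τ k p +
      ((k - 2 * p + 1) * (k - 2 * p + 2) : R) • τ k (p - 1) := by
    simp only [hL, hΛ, map_smul, add_sub_cancel_right]
    push_cast
    module
  calc ⁅L, Λ⁆ (τ k p) = L (Λ (τ k p)) - Λ (L (τ k p)) := rfl
    _ = (2 * k - 2 * N) • τ k p := by rw [hLΛ, hΛL]; module
    _ = H (τ k p) := (hH k p).symm

theorem stmt11_general (hτ : span R (Set.range (Function.uncurry τ)) = ⊤)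
    (hL : ∀ k p : ℤ, L (τ k p) = (k - 2 * p + 1 : R) • τ (k + 1) p)
    (hΛ : ∀ k p : ℤ, Λ (τ k p) =
      (2 * N - 2 * p - k + 1) • τ (k - 1) p + (k - 2 * p + 1 : R) • τ (k - 1) (p - 1))
    (hH : ∀ k p : ℤ, H (τ k p) = (2 * k - 2 * N) • τ k p) :
    ⁅L, Λ⁆ = H ∧ ⁅H, L⁆ = (2 : R) • L ∧ ⁅H, Λ⁆ = (-2 : R) • Λ := by
  have mem_weight {k p : ℤ} {μ : R} (hμ : 2 * k - 2 * N = μ) : τ k p ∈ H.eigenspace μ :=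
    mem_eigenspace_iff.mpr (hμ ▸ hH k p)
  have weight (x : ℤ × ℤ) : Function.uncurry τ x ∈ H.eigenspace (2 * x.1 - 2 * N) :=
    mem_weight rfl
  refine ⟨lie_raising_lowering_eq_grading hτ hL hΛ hH,
    lie_eq_smul_of_apply_mem_eigenspace hτ weight fun ⟨k, p⟩ => ?_,
    lie_eq_smul_of_apply_mem_eigenspace hτ weight fun ⟨k, p⟩ => ?_⟩
  · rw [Function.uncurry_apply_pair, hL]
    exact smul_mem _ _ (mem_weight (by push_cast; ring))
  · rw [Function.uncurry_apply_pair, hΛ]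
    exact add_mem (smul_mem _ _ (mem_weight (by push_cast; ring)))
      (smul_mem _ _ (mem_weight (by push_cast; ring)))

end Commutators

theorem e_eq_single (v : Idx) : e v.1.1 v.1.2 = Finsupp.single v 1 := dif_pos v.2

theorem e_eq_zero {k p : ℤ} (h : ¬(0 ≤ p ∧ 2 * p ≤ k)) : e k p = 0 := dif_neg h

theorem span_range_e : Submodule.span ℝ (Set.range (Function.uncurry e)) = ⊤ := by
  rw [eq_top_iff, ← Finsupp.basisSingleOne.span_eq]
  refine Submodule.span_mono (Set.range_subset_iff.mpr fun v => ⟨v.1, ?_⟩)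
  rw [Finsupp.coe_basisSingleOne]
  exact e_eq_single v

theorem sub_two_mul_smul_e_eq_zero {k p : ℤ} (h : 0 ≤ p → k ≤ 2 * p) :
    (k - 2 * p : ℝ) • e k p = 0 := by
  obtain rfl | hk := eq_or_ne k (2 * p)
  · rw [Int.cast_mul, Int.cast_ofNat, sub_self, zero_smul]
  · rw [e_eq_zero (by lia), smul_zero]

theorem map_e_of_map_single {W : Type*} [AddCommGroup W] [Module ℝ W] {T : M →ₗ[ℝ] W}
    {f : ℤ → ℤ → W} (hT : ∀ v : Idx, T (Finsupp.single v 1) = f v.1.1 v.1.2)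
    (hf : ∀ k p, ¬(0 ≤ p ∧ 2 * p ≤ k) → f k p = 0) (k p : ℤ) : T (e k p) = f k p := by
  by_cases h : 0 ≤ p ∧ 2 * p ≤ k
  · exact (congrArg T (e_eq_single ⟨(k, p), h⟩)).trans (hT ⟨(k, p), h⟩)
  · rw [e_eq_zero h, map_zero, hf k p h]

theorem opL_e : ∀ k p : ℤ, opL (e k p) = (k - 2 * p + 1 : ℝ) • e (k + 1) p := by
  refine map_e_of_map_single (fun v => by simp [opL]) fun k p h => ?_
  convert sub_two_mul_smul_e_eq_zero (k := k + 1) (p := p) (by lia) using 2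
  push_cast
  ring

theorem opLam_e (n : ℕ) : ∀ k p : ℤ,
    opLam n (e k p) = (2 * n - 2 * p - k + 1 : ℝ) • e (k - 1) p +
      (k - 2 * p + 1 : ℝ) • e (k - 1) (p - 1) := by
  refine map_e_of_map_single (fun v => by simp [opLam]) fun k p h => ?_
  rw [e_eq_zero (k := k - 1) (p := p) (by lia), smul_zero, zero_add]
  convert sub_two_mul_smul_e_eq_zero (k := k - 1) (p := p - 1) (by lia) using 2
  push_cast
  ring

theorem opH_e (n : ℕ) : ∀ k p : ℤ, opH n (e k p) = (2 * k - 2 * n : ℝ) • e k p := by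
  refine map_e_of_map_single (fun v => by simp [opH]) fun k p h => ?_
  rw [e_eq_zero h, smul_zero]

/-- The maps `L`, `Λ`, `H` satisfy the `sl₂(ℝ)` commutation relations `[L,Λ] = H`,
`[H,L] = 2L`, `[H,Λ] = -2Λ`; hence `X ↦ L`, `Y ↦ Λ`, `H ↦ H` defines a representation
of `sl(2,ℝ)` on `M`. -/
theorem stmt11 (n : ℕ) :
    opL ∘ₗ opLam n - opLam n ∘ₗ opL = opH n ∧
    opH n ∘ₗ opL - opL ∘ₗ opH n = (2 : ℝ) • opL ∧
    opH n ∘ₗ opLam n - opLam n ∘ₗ opH n = (-2 : ℝ) • opLam n :=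
  stmt11_general span_range_e opL_e (opLam_e n) (opH_e n)
end

section
/- For all integers n, l, i, j with 0 ≤ 2l ≤ n and 0 ≤ i, j ≤ l, the Tasaki matrix entries satisfy the antidiagonal (palindromic) symmetry T(n, 2l, i, j) = T(n, 2l, l−i, l−j). -/
/-!
Put `N = n + 1/2` and `y x = x (N - x)`. Since `(r - s) (N - r - s) = y r - y s`, the part of the
`r`-th summand of `T n (2l) i j` that depends on `i` is, up to a factor depending on `r` only, the
Newton polynomial `u i r = ∏_{s < i} (y s - y r) / κ s` with `κ s = (l - s) (l - s - 1/2)`.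
So `T n (2l)` is a multiple of the Gram matrix of the `u i` for a weight on `{0, …, l}`.

Two operators are self-adjoint for this weight. Multiplication by `y` maps `u i` to
`y i • u i - κ i • u (i + 1)`, and a birth-death operator of Racah type maps `u (l - i)` to
`y i • u (l - i) - κ i • u (l - i - 1)`. The Gram matrix and its reflection
`(i, j) ↦ (l - i, l - j)` therefore satisfy the same recurrence, which forces them to coincide.
-/

/-- `ω m` is the volume of the `m`-dimensional unit euclidean ball: `π^(m/2)/Γ(m/2+1)`. -/
noncomputable def ω (m : ℕ) : ℝ :=
  Real.pi ^ ((m : ℝ) / 2) / Real.Gamma ((m : ℝ) / 2 + 1)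

/-- The `(i,j)` entry of the Tasaki matrix `T^n_k`:
`T(n,k,i,j) = (-1)^(i+j) ⬝ (ω_k ω_{2n-k} / πⁿ) ⬝ ∑_{r = max(i,j)}^{⌊k/2⌋} [⋯]`.
All inner subtractions are natural-number subtractions, which agree with the integer
values in the intended range `k ≤ n`, `i, j ≤ ⌊k/2⌋`; the truncation `(2r-2i-1)‼` for
`i = r` gives `0‼ = 1`, matching the convention `(-1)‼ = 1`. -/
noncomputable def T (n k i j : ℕ) : ℝ :=
  (-1 : ℝ) ^ (i + j) * (ω k * ω (2 * n - k) / Real.pi ^ n) *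
    ∑ r ∈ Finset.Icc (max i j) (k / 2),
      (1 / (n.choose (2 * r) : ℝ)) *
        (((2 * n - 2 * r - k).factorial * (n - r).factorial * (k - 2 * i).factorial *
            (k - 2 * j).factorial : ℕ) : ℝ) /
        ((8 ^ r * (k - 2 * r).factorial * (2 * n - 4 * r).factorial *
            (2 * r - 2 * i).factorial * (2 * r - 2 * j).factorial : ℕ) : ℝ) *
        ((Nat.doubleFactorial (2 * n - 2 * r + 1) * Nat.doubleFactorial (2 * n - 4 * r + 1) *
            Nat.doubleFactorial (2 * r - 2 * i - 1) *
            Nat.doubleFactorial (2 * r - 2 * j - 1) : ℕ) : ℝ) /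
        ((Nat.doubleFactorial (2 * n - 2 * r - 2 * i + 1) *
            Nat.doubleFactorial (2 * n - 2 * r - 2 * j + 1) : ℕ) : ℝ)

section BidiagonalSymm

variable {R : Type*} [CommRing R]

/-- `BidiagonalSymm l y κ G` says that `Aᵀ G = G A` on the indices `0, …, l`, where `A` is the
bidiagonal matrix with diagonal `y` and subdiagonal `-κ`. It is stated entrywise; for `i = l` or
`j = l` it mentions entries of `G` beyond `l`, which are harmless because `κ l = 0` in practice. -/
def BidiagonalSymm (l : ℕ) (y κ : ℕ → R) (G : ℕ → ℕ → R) : Prop :=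
  ∀ i ≤ l, ∀ j ≤ l, (y i - y j) * G i j = κ i * G (i + 1) j - κ j * G i (j + 1)

namespace BidiagonalSymm

variable [NoZeroDivisors R] {l : ℕ} {y κ : ℕ → R} {G H : ℕ → ℕ → R}

theorem eq_of_col_zero (hG : BidiagonalSymm l y κ G) (hH : BidiagonalSymm l y κ H)
    (hκl : κ l = 0) (hκ : ∀ i < l, κ i ≠ 0) (h0 : ∀ i ≤ l, G i 0 = H i 0) {i j : ℕ}
    (hi : i ≤ l) (hj : j ≤ l) : G i j = H i j := by
  induction j generalizing i with
  | zero => exact h0 i hi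
  | succ j ih =>
    have hnext : κ i * G (i + 1) j = κ i * H (i + 1) j := by
      obtain rfl | hil := hi.eq_or_lt
      · rw [hκl, zero_mul, zero_mul]
      · rw [ih hil (by omega)]
    apply mul_left_cancel₀ (hκ j hj)
    linear_combination hG i hi j (by omega) - hH i hi j (by omega)
      - (y i - y j) * ih hi (by omega) + hnext

theorem eq_of_col_last (hG : BidiagonalSymm l y κ G) (hH : BidiagonalSymm l y κ H)
    (hκl : κ l = 0) (hκ : ∀ i < l, κ i ≠ 0) (h0 : G 0 l = H 0 l) {i : ℕ} (hi : i ≤ l) :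
    G i l = H i l := by
  induction i with
  | zero => exact h0
  | succ i ih =>
    have hGi := hG i (by omega) l le_rfl
    have hHi := hH i (by omega) l le_rfl
    rw [hκl] at hGi hHi
    apply mul_left_cancel₀ (hκ i hi)
    linear_combination hHi - hGi + (y i - y l) * ih (by omega)

theorem eq_reflect (hG : BidiagonalSymm l y κ G)
    (hG' : BidiagonalSymm l y κ fun i j ↦ G (l - i) (l - j)) (hsymm : ∀ i j, G i j = G j i)
    (hκl : κ l = 0) (hκ : ∀ i < l, κ i ≠ 0) {i j : ℕ} (hi : i ≤ l) (hj : j ≤ l) :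
    G i j = G (l - i) (l - j) := by
  have hlast : ∀ k ≤ l, G k l = G (l - k) (l - l) := fun k hk ↦
    hG.eq_of_col_last hG' hκl hκ (by simpa using hsymm 0 l) hk
  refine hG.eq_of_col_zero hG' hκl hκ (fun k hk ↦ ?_) hi hj
  simpa [Nat.sub_sub_self hk] using (hlast (l - k) (Nat.sub_le l k)).symm

end BidiagonalSymm

/-- The Gram matrix of the family of functions `u i` for the form `∑ r ∈ s, w r * f r * g r`. -/
def gramMatrix {ι : Type*} (s : Finset ι) (w : ι → R) (u : ℕ → ι → R) (i j : ℕ) : R :=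
  ∑ r ∈ s, w r * u i r * u j r

theorem gramMatrix_comm {ι : Type*} (s : Finset ι) (w : ι → R) (u : ℕ → ι → R) (i j : ℕ) :
    gramMatrix s w u i j = gramMatrix s w u j i :=
  Finset.sum_congr rfl fun _ _ ↦ mul_right_comm _ _ _

theorem bidiagonalSymm_gramMatrix {ι : Type*} {s : Finset ι} {w : ι → R} {u : ℕ → ι → R} {l : ℕ}
    {y κ : ℕ → R} {D : (ι → R) → ι → R}
    (hD : ∀ f g, ∑ r ∈ s, w r * D f r * g r = ∑ r ∈ s, w r * f r * D g r)
    (hu : ∀ i ≤ l, ∀ r ∈ s, D (u i) r = y i * u i r - κ i * u (i + 1) r) :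
    BidiagonalSymm l y κ (gramMatrix s w u) := by
  intro i hi j hj
  have hleft : ∑ r ∈ s, w r * D (u i) r * u j r =
      y i * gramMatrix s w u i j - κ i * gramMatrix s w u (i + 1) j := by
    simp only [gramMatrix, Finset.mul_sum, ← Finset.sum_sub_distrib]
    exact Finset.sum_congr rfl fun r hr ↦ by rw [hu i hi r hr]; ring
  have hright : ∑ r ∈ s, w r * u i r * D (u j) r =
      y j * gramMatrix s w u i j - κ j * gramMatrix s w u i (j + 1) := by
    simp only [gramMatrix, Finset.mul_sum, ← Finset.sum_sub_distrib]
    exact Finset.sum_congr rfl fun r hr ↦ by rw [hu j hj r hr]; ring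
  linear_combination hright - hleft + hD (u i) (u j)

/-- The generator of the birth-death chain on `ℕ` with death rates `a` and birth rates `c`. The
term `f (r - 1)` is truncated at `r = 0`, which is harmless when `a 0 = 0`. -/
def birthDeath (a c : ℕ → R) (f : ℕ → R) (r : ℕ) : R :=
  a r * (f (r - 1) - f r) + c r * (f (r + 1) - f r)

/- Under detailed balance both sides differ by a telescoping sum of Casoratians. -/
theorem sum_birthDeath_mul_comm {w a c : ℕ → R} {l : ℕ} (ha : a 0 = 0) (hc : c l = 0)
    (hw : ∀ r < l, w (r + 1) * a (r + 1) = w r * c r) (f g : ℕ → R) :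
    ∑ r ∈ Finset.range (l + 1), w r * birthDeath a c f r * g r =
      ∑ r ∈ Finset.range (l + 1), w r * f r * birthDeath a c g r := by
  let down (r : ℕ) : R := w r * a r * (f (r - 1) * g r - f r * g (r - 1))
  let up (r : ℕ) : R := w r * c r * (f r * g (r + 1) - f (r + 1) * g r)
  have hup : ∀ r ∈ Finset.range l, down (r + 1) = up r := fun r hr ↦ by
    simp only [down, up, hw r (Finset.mem_range.mp hr), Nat.add_sub_cancel]
  have hsum : ∑ r ∈ Finset.range (l + 1), down r = ∑ r ∈ Finset.range (l + 1), up r := by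
    rw [Finset.sum_range_succ', Finset.sum_range_succ, Finset.sum_congr rfl hup]
    simp only [down, up, ha, hc, mul_zero, zero_mul]
  rw [← sub_eq_zero, ← Finset.sum_sub_distrib] at hsum ⊢
  rw [← hsum]
  refine Finset.sum_congr rfl fun r _ ↦ ?_
  simp only [birthDeath, down, up]
  ring

end BidiagonalSymm

section NewtonBasis

/-- The quadratic lattice `y x = x (N - x)` at which the Newton basis interpolates. -/
def quadNode (N x : ℝ) : ℝ := x * (N - x)

/-- The normalising factor `κ x = (l - x) (l - x - 1/2)` of the Newton basis, which is also the
off-diagonal coefficient of the two operators acting on it. -/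
noncomputable def offDiag (l x : ℝ) : ℝ := (l - x) * (l - x - 1 / 2)

/-- The normalised Newton polynomials `∏_{s < i} (y s - y x) / κ s` on the quadratic lattice. -/
noncomputable def newtonBasis (N l : ℝ) (i : ℕ) (x : ℝ) : ℝ :=
  ∏ s ∈ Finset.range i, (quadNode N s - quadNode N x) / offDiag l s

/-- The birth rates of the birth-death operator of Racah type that is bidiagonal on the Newton
basis, with the opposite shift to that of multiplication by `quadNode N`. -/
noncomputable def birthRate (N l x : ℝ) : ℝ :=
  (N - x) * ((x + 1 / 2) * offDiag l x / ((N - 2 * x - 1) * (N - 2 * x)))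

/-- The death rates going with `birthRate`; they are its mirror image under the symmetry
`x ↦ N - x` of the quadratic lattice. -/
noncomputable def deathRate (N l x : ℝ) : ℝ :=
  x * ((N - x + 1 / 2) * offDiag l (N - x) / ((N - 2 * x + 1) * (N - 2 * x)))

variable {N l x : ℝ} {i k r : ℕ}

theorem quadNode_reflect (N x : ℝ) : quadNode N (N - x) = quadNode N x := by
  unfold quadNode
  ring

theorem offDiag_self (x : ℝ) : offDiag x x = 0 := by
  simp [offDiag]

theorem offDiag_ne_zero {l s : ℕ} (h : s < l) : offDiag l s ≠ 0 := by
  have h1 : (s : ℝ) + 1 ≤ l := by exact_mod_cast h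
  exact (mul_pos (by linarith) (by linarith)).ne'

theorem deathRate_zero (N l : ℝ) : deathRate N l 0 = 0 :=
  zero_mul _

theorem birthRate_self (N l : ℝ) : birthRate N l l = 0 := by
  simp [birthRate, offDiag_self]

theorem newtonBasis_zero (N l x : ℝ) : newtonBasis N l 0 x = 1 :=
  Finset.prod_range_zero _

theorem newtonBasis_succ (N l : ℝ) (i : ℕ) (x : ℝ) :
    newtonBasis N l (i + 1) x =
      newtonBasis N l i x * ((quadNode N i - quadNode N x) / offDiag l i) :=
  Finset.prod_range_succ _ _

theorem newtonBasis_reflect (N l : ℝ) (i : ℕ) (x : ℝ) :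
    newtonBasis N l i (N - x) = newtonBasis N l i x := by
  simp only [newtonBasis, quadNode_reflect]

theorem newtonBasis_natCast_eq_zero (h : r < i) : newtonBasis N l i r = 0 :=
  Finset.prod_eq_zero (Finset.mem_range.mpr h) (by rw [sub_self, zero_div])

theorem newtonBasis_add_one (N l : ℝ) (k : ℕ) (x : ℝ) :
    (N - x) * newtonBasis N l (k + 1) (x + 1) =
      -((x + 1) * (N - x - k) * (N - x - k - 1)) / offDiag l k * newtonBasis N l k x := by
  induction k with
  | zero =>
    simp only [newtonBasis_succ, newtonBasis_zero, quadNode]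
    push_cast
    ring
  | succ k ih =>
    rw [newtonBasis_succ, ← mul_assoc, ih, newtonBasis_succ N l k x]
    simp only [quadNode]
    push_cast
    ring

theorem newtonBasis_sub_one (N l : ℝ) (k : ℕ) (x : ℝ) :
    x * newtonBasis N l (k + 1) (x - 1) =
      -((N - x + 1) * (x - k) * (x - k - 1)) / offDiag l k * newtonBasis N l k x := by
  have h := newtonBasis_add_one N l k (N - x)
  rwa [newtonBasis_reflect, sub_sub_cancel, show N - x + 1 = N - (x - 1) by ring,
    newtonBasis_reflect, ← show N - x + 1 = N - (x - 1) by ring] at h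

theorem quadNode_mul_newtonBasis {l : ℕ} (hi : i ≤ l) (hr : r ≤ l) :
    quadNode N r * newtonBasis N l i r =
      quadNode N i * newtonBasis N l i r - offDiag l i * newtonBasis N l (i + 1) r := by
  obtain rfl | hil := hi.eq_or_lt
  · obtain rfl | hri := hr.eq_or_lt
    · rw [offDiag_self, zero_mul, sub_zero]
    · rw [newtonBasis_natCast_eq_zero hri, offDiag_self]
      ring
  · rw [newtonBasis_succ]
    field_simp [offDiag_ne_zero hil]
    ring

/- The difference equation below, after clearing `offDiag l k` and the common factor
`newtonBasis N l k x`. -/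
theorem quadNode_difference_eq (t : ℝ) (h0 : N - 2 * x ≠ 0) (h1 : N - 2 * x - 1 ≠ 0)
    (h2 : N - 2 * x + 1 ≠ 0) :
    quadNode N l * (quadNode N t - quadNode N x)
        + (N - x + 1 / 2) * offDiag l (N - x) / ((N - 2 * x + 1) * (N - 2 * x))
          * (-((N - x + 1) * (x - t) * (x - t - 1)) - x * (quadNode N t - quadNode N x))
        + (x + 1 / 2) * offDiag l x / ((N - 2 * x - 1) * (N - 2 * x))
          * (-((x + 1) * (N - x - t) * (N - x - t - 1))
            - (N - x) * (quadNode N t - quadNode N x)) =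
      quadNode N (l - (t + 1)) * (quadNode N t - quadNode N x)
        - offDiag l (l - (t + 1)) * offDiag l t := by
  unfold quadNode offDiag
  generalize hd : N - 2 * x = d at *
  obtain rfl : N = d + 2 * x := by linarith
  field_simp
  ring

theorem newtonBasis_difference_eq (hk : offDiag l k ≠ 0) (h0 : N - 2 * x ≠ 0)
    (h1 : N - 2 * x - 1 ≠ 0) (h2 : N - 2 * x + 1 ≠ 0) :
    quadNode N l * newtonBasis N l (k + 1) x
        + (deathRate N l x * (newtonBasis N l (k + 1) (x - 1) - newtonBasis N l (k + 1) x)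
          + birthRate N l x * (newtonBasis N l (k + 1) (x + 1) - newtonBasis N l (k + 1) x)) =
      quadNode N (l - (k + 1)) * newtonBasis N l (k + 1) x
        - offDiag l (l - (k + 1)) * newtonBasis N l k x := by
  have hcoeff := quadNode_difference_eq (l := l) k h0 h1 h2
  have hcancel : offDiag l k * (offDiag l k)⁻¹ = 1 := mul_inv_cancel₀ hk
  rw [deathRate, birthRate]
  generalize (N - x + 1 / 2) * offDiag l (N - x) / ((N - 2 * x + 1) * (N - 2 * x)) = α at *
  generalize (x + 1 / 2) * offDiag l x / ((N - 2 * x - 1) * (N - 2 * x)) = β at *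
  linear_combination α * newtonBasis_sub_one N l k x + β * newtonBasis_add_one N l k x
    + newtonBasis N l k x * (offDiag l k)⁻¹ * hcoeff
    - offDiag l (l - (k + 1)) * newtonBasis N l k x * hcancel
    + (quadNode N l - quadNode N (l - (k + 1)) - α * x - β * (N - x)) * newtonBasis_succ N l k x

end NewtonBasis

section HalfIntegersAndFactorials

theorem intCast_add_half_ne_zero (z : ℤ) : (z : ℝ) + 1 / 2 ≠ 0 := by
  intro h
  have h2 : ((2 * z + 1 : ℤ) : ℝ) = 0 := by
    push_cast
    linarith
  have := Int.cast_eq_zero.mp h2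
  omega

theorem factorial_two_mul_add_two (m : ℕ) :
    ((2 * m + 2).factorial : ℝ) = (2 * m + 2) * (2 * m + 1) * (2 * m).factorial := by
  rw [Nat.factorial_succ, Nat.factorial_succ]
  push_cast
  ring

theorem centralBinom_succ (m : ℕ) :
    ((m + 1).centralBinom : ℝ) = 2 * (2 * m + 1) * m.centralBinom / (m + 1) := by
  rw [eq_div_iff (by positivity), mul_comm]
  exact_mod_cast m.succ_mul_centralBinom_succ

theorem doubleFactorial_div_factorial_two_mul (m : ℕ) :
    ((2 * m - 1).doubleFactorial : ℝ) / (2 * m).factorial = 1 / (2 ^ m * m.factorial) := by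
  obtain _ | m := m
  · simp
  · have hfac : ((2 * (m + 1)).factorial : ℝ) =
        2 ^ (m + 1) * (m + 1).factorial * (2 * m + 1).doubleFactorial := by
      rw [show 2 * (m + 1) = 2 * m + 1 + 1 by ring, Nat.factorial_eq_mul_doubleFactorial,
        show 2 * m + 1 + 1 = 2 * (m + 1) by ring, Nat.doubleFactorial_two_mul]
      push_cast
      ring
    have := Nat.doubleFactorial_pos (2 * m + 1)
    rw [hfac, show 2 * (m + 1) - 1 = 2 * m + 1 by omega]
    field_simp

theorem factorial_two_mul (m : ℕ) :
    ((2 * m).factorial : ℝ) = m.centralBinom * m.factorial ^ 2 := by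
  have h := Nat.choose_mul_factorial_mul_factorial (Nat.le_mul_of_pos_left m two_pos)
  rw [← Nat.centralBinom_eq_two_mul_choose, two_mul, Nat.add_sub_cancel, ← two_mul] at h
  rw [← h]
  push_cast
  ring

theorem doubleFactorial_two_mul_add_one (m : ℕ) :
    ((2 * m + 1).doubleFactorial : ℝ) =
      (2 * m + 1) * m.centralBinom * m.factorial / 2 ^ m := by
  have h := Nat.factorial_eq_mul_doubleFactorial (2 * m)
  rw [Nat.factorial_succ, Nat.doubleFactorial_two_mul] at h
  have h' := congrArg (Nat.cast (R := ℝ)) h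
  push_cast at h'
  rw [factorial_two_mul] at h'
  field_simp
  apply mul_right_cancel₀ (b := (m.factorial : ℝ)) (by positivity)
  linear_combination -h'

end HalfIntegersAndFactorials

section TasakiMatrix

/-- The Newton basis with the parameters for which it occurs in the Tasaki matrix `T n (2 * l)`. -/
noncomputable def tasakiBasis (n l i r : ℕ) : ℝ :=
  newtonBasis (n + 1 / 2) l i r

/-- The weight on `{0, …, l}` for which the Tasaki matrix `T n (2 * l)` is a multiple of the Gram
matrix of `tasakiBasis n l`. -/
noncomputable def tasakiWeight (n l r : ℕ) : ℝ :=
  (2 * n - 4 * r + 1) * r.centralBinom * (2 * n - 2 * r - 2 * l).factorial /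
    (16 ^ r * (2 * n - 2 * r + 1) * (n - r).centralBinom * (2 * l - 2 * r).factorial)

/-- The self-adjoint operator that shifts `tasakiBasis n l` downwards. -/
noncomputable def tasakiOperator (n l : ℕ) (f : ℕ → ℝ) (r : ℕ) : ℝ :=
  quadNode (n + 1 / 2) l * f r +
    birthDeath (fun r ↦ deathRate (n + 1 / 2) l r) (fun r ↦ birthRate (n + 1 / 2) l r) f r

variable {n l r i : ℕ}

theorem tasakiWeight_detailed_balance (hl : 2 * l ≤ n) (hr : r < l) :
    tasakiWeight n l (r + 1) * deathRate (n + 1 / 2) l (r + 1 : ℕ) =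
      tasakiWeight n l r * birthRate (n + 1 / 2) l r := by
  obtain ⟨a, rfl⟩ : ∃ a, l = r + a + 1 := Nat.exists_eq_add_of_lt hr
  obtain ⟨b, rfl⟩ : ∃ b, n = 2 * (r + a + 1) + b := Nat.exists_eq_add_of_le hl
  rw [deathRate, birthRate, tasakiWeight, tasakiWeight, offDiag, offDiag,
    show 2 * (2 * (r + a + 1) + b) - 2 * r - 2 * (r + a + 1) = 2 * (a + b) + 2 by omega,
    show 2 * (2 * (r + a + 1) + b) - 2 * (r + 1) - 2 * (r + a + 1) = 2 * (a + b) by omega,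
    show 2 * (r + a + 1) - 2 * r = 2 * a + 2 by omega,
    show 2 * (r + a + 1) - 2 * (r + 1) = 2 * a by omega,
    show 2 * (r + a + 1) + b - r = (r + 2 * a + b + 1) + 1 by omega,
    show 2 * (r + a + 1) + b - (r + 1) = r + 2 * a + b + 1 by omega,
    factorial_two_mul_add_two, factorial_two_mul_add_two, centralBinom_succ r,
    centralBinom_succ (r + 2 * a + b + 1)]
  push_cast
  rw [show 2 * ((r : ℝ) + a + 1) + b + 1 / 2 - 2 * (r + 1) + 1 = b + 2 * a + 3 / 2 by ring,
    show 2 * ((r : ℝ) + a + 1) + b + 1 / 2 - 2 * (r + 1) = b + 2 * a + 1 / 2 by ring,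
    show 2 * ((r : ℝ) + a + 1) + b + 1 / 2 - 2 * r - 1 = b + 2 * a + 3 / 2 by ring,
    show 2 * ((r : ℝ) + a + 1) + b + 1 / 2 - 2 * r = b + 2 * a + 5 / 2 by ring,
    show 2 * (2 * ((r : ℝ) + a + 1) + b) - 2 * (r + 1) + 1 = 2 * r + 4 * a + 2 * b + 3 by ring,
    show 2 * (2 * ((r : ℝ) + a + 1) + b) - 2 * r + 1 = 2 * r + 4 * a + 2 * b + 5 by ring]
  have hbr := r.centralBinom_pos
  have hbn := (r + 2 * a + b + 1).centralBinom_pos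
  field_simp
  ring

theorem tasakiOperator_isSelfAdjoint (hl : 2 * l ≤ n) (f g : ℕ → ℝ) :
    ∑ r ∈ Finset.range (l + 1), tasakiWeight n l r * tasakiOperator n l f r * g r =
      ∑ r ∈ Finset.range (l + 1), tasakiWeight n l r * f r * tasakiOperator n l g r := by
  have hbd := sum_birthDeath_mul_comm (a := fun r ↦ deathRate (n + 1 / 2) l r)
    (c := fun r ↦ birthRate (n + 1 / 2) l r) (by rw [Nat.cast_zero, deathRate_zero])
    (birthRate_self _ _) (fun r hr ↦ tasakiWeight_detailed_balance hl hr) f g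
  simp only [tasakiOperator, mul_add, add_mul, Finset.sum_add_distrib, hbd, add_left_inj]
  exact Finset.sum_congr rfl fun _ _ ↦ by ring

theorem tasakiOperator_tasakiBasis (hi : i ≤ l) :
    tasakiOperator n l (tasakiBasis n l i) r =
      quadNode (n + 1 / 2) (l - i) * tasakiBasis n l i r
        - offDiag l (l - i) * tasakiBasis n l (i - 1) r := by
  obtain _ | k := i
  · simp [tasakiOperator, birthDeath, tasakiBasis, newtonBasis_zero, offDiag_self]
  · have hdiff := newtonBasis_difference_eq (N := n + 1 / 2) (x := r) (offDiag_ne_zero hi)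
      (by convert intCast_add_half_ne_zero (n - 2 * r) using 1; push_cast; ring)
      (by convert intCast_add_half_ne_zero (n - 2 * r - 1) using 1; push_cast; ring)
      (by convert intCast_add_half_ne_zero (n - 2 * r + 1) using 1; push_cast; ring)
    obtain _ | r := r <;>
    simpa [tasakiOperator, birthDeath, tasakiBasis, deathRate_zero] using hdiff

theorem bidiagonalSymm_tasaki (n l : ℕ) :
    BidiagonalSymm l (fun i ↦ quadNode (n + 1 / 2) i) (fun i ↦ offDiag l i)
      (gramMatrix (Finset.range (l + 1)) (tasakiWeight n l) (tasakiBasis n l)) :=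
  bidiagonalSymm_gramMatrix (D := fun f r ↦ quadNode (n + 1 / 2) r * f r)
    (fun _ _ ↦ Finset.sum_congr rfl fun _ _ ↦ by ring)
    (fun _ hi _ hr ↦ quadNode_mul_newtonBasis hi (Finset.mem_range_succ_iff.mp hr))

theorem bidiagonalSymm_tasaki_reflect (hl : 2 * l ≤ n) :
    BidiagonalSymm l (fun i ↦ quadNode (n + 1 / 2) i) (fun i ↦ offDiag l i)
      (fun i j ↦ gramMatrix (Finset.range (l + 1)) (tasakiWeight n l) (tasakiBasis n l)
        (l - i) (l - j)) := by
  refine bidiagonalSymm_gramMatrix (u := fun i ↦ tasakiBasis n l (l - i))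
    (tasakiOperator_isSelfAdjoint hl) (fun i hi r _ ↦ ?_)
  rw [tasakiOperator_tasakiBasis (Nat.sub_le l i), Nat.cast_sub hi, sub_sub_cancel, Nat.sub_sub]

theorem tasakiBasis_eq_doubleFactorial (hl : 2 * l ≤ n) (hr : r ≤ l) (hi : i ≤ r) :
    tasakiBasis n l i r =
      2 ^ r * r.factorial * (2 * n - 2 * r + 1).doubleFactorial / (2 * l).factorial *
        ((-1) ^ i * (2 * l - 2 * i).factorial *
          ((2 * r - 2 * i - 1).doubleFactorial / (2 * r - 2 * i).factorial) /
          (2 * n - 2 * r - 2 * i + 1).doubleFactorial) := by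
  rw [← Nat.mul_sub 2 r i, doubleFactorial_div_factorial_two_mul]
  induction i with
  | zero =>
    have := Nat.doubleFactorial_pos (2 * n - 2 * r + 1)
    simp only [tasakiBasis, newtonBasis_zero, mul_zero, Nat.sub_zero, pow_zero, one_mul]
    field_simp
  | succ i ih =>
    rw [tasakiBasis, newtonBasis_succ, ← tasakiBasis, ih (by omega)]
    obtain ⟨a, rfl⟩ : ∃ a, r = i + 1 + a := Nat.exists_eq_add_of_le hi
    obtain ⟨b, rfl⟩ : ∃ b, l = i + 1 + a + b := Nat.exists_eq_add_of_le hr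
    obtain ⟨c, rfl⟩ : ∃ c, n = 2 * (i + 1 + a + b) + c := Nat.exists_eq_add_of_le hl
    have hratio : (quadNode ((2 * (i + 1 + a + b) + c : ℕ) + 1 / 2) i -
        quadNode ((2 * (i + 1 + a + b) + c : ℕ) + 1 / 2) (i + 1 + a : ℕ)) /
          offDiag (i + 1 + a + b : ℕ) i =
        -((a + 1) * (a + 2 * b + c + 3 / 2)) / ((a + b + 1) * (a + b + 1 / 2)) := by
      unfold quadNode offDiag
      push_cast
      congr 1 <;> ring
    rw [show 2 * (2 * (i + 1 + a + b) + c) - 2 * (i + 1 + a) - 2 * i + 1 =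
        2 * (a + 2 * b + c) + 1 + 2 by omega,
      show 2 * (2 * (i + 1 + a + b) + c) - 2 * (i + 1 + a) - 2 * (i + 1) + 1 =
        2 * (a + 2 * b + c) + 1 by omega,
      show 2 * (i + 1 + a + b) - 2 * i = 2 * (a + b) + 2 by omega,
      show 2 * (i + 1 + a + b) - 2 * (i + 1) = 2 * (a + b) by omega,
      show i + 1 + a - i = a + 1 by omega, show i + 1 + a - (i + 1) = a by omega,
      factorial_two_mul_add_two, Nat.doubleFactorial_add_two, Nat.factorial_succ, hratio]
    have := Nat.doubleFactorial_pos (2 * (a + 2 * b + c) + 1)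
    push_cast
    field_simp
    ring

theorem tasakiWeight_eq_doubleFactorial (hl : 2 * l ≤ n) (hr : r ≤ l) :
    tasakiWeight n l r =
      n.factorial *
        (1 / (n.choose (2 * r) : ℝ) * ((2 * n - 2 * r - 2 * l).factorial * (n - r).factorial) /
          (8 ^ r * (2 * l - 2 * r).factorial * (2 * n - 4 * r).factorial) *
          ((2 * n - 2 * r + 1).doubleFactorial * (2 * n - 4 * r + 1).doubleFactorial)) /
        (2 ^ r * r.factorial * (2 * n - 2 * r + 1).doubleFactorial) ^ 2 := by
  obtain ⟨m, rfl⟩ : ∃ m, n = 2 * r + m := ⟨n - 2 * r, by omega⟩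
  have hchoose : ((2 * r + m).choose (2 * r) : ℝ) =
      (2 * r + m).factorial / ((2 * r).factorial * m.factorial) :=
    Nat.cast_add_choose ℝ
  have hpow : (16 : ℝ) ^ r = 2 ^ r * 8 ^ r := by
    rw [← mul_pow]
    norm_num
  have hbr := r.centralBinom_pos
  have hbm := m.centralBinom_pos
  have hbn := (m + r).centralBinom_pos
  rw [tasakiWeight, show 2 * (2 * r + m) - 2 * r + 1 = 2 * (m + r) + 1 by omega,
    show 2 * (2 * r + m) - 4 * r = 2 * m by omega, show 2 * r + m - r = m + r by omega, hchoose,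
    factorial_two_mul r, factorial_two_mul m, doubleFactorial_two_mul_add_one,
    doubleFactorial_two_mul_add_one, hpow]
  push_cast
  rw [show 2 * (2 * (r : ℝ) + m) - 2 * r + 1 = 2 * (m + r) + 1 by ring,
    show 2 * (2 * (r : ℝ) + m) - 4 * r + 1 = 2 * m + 1 by ring]
  field_simp
  ring

theorem gramMatrix_tasaki_eq_sum_Icc (n l i j : ℕ) :
    gramMatrix (Finset.range (l + 1)) (tasakiWeight n l) (tasakiBasis n l) i j =
      ∑ r ∈ Finset.Icc (max i j) l,
        tasakiWeight n l r * tasakiBasis n l i r * tasakiBasis n l j r := by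
  rw [gramMatrix, eq_comm]
  refine Finset.sum_subset (fun r hr ↦ ?_) fun r hr hr' ↦ ?_
  · rw [Finset.mem_Icc] at hr
    exact Finset.mem_range_succ_iff.mpr hr.2
  · rw [Finset.mem_range_succ_iff] at hr
    rw [Finset.mem_Icc, not_and_or, or_iff_left (not_not.mpr hr), not_le, lt_max_iff] at hr'
    obtain h | h := hr' <;> simp [tasakiBasis, newtonBasis_natCast_eq_zero h]

theorem T_two_mul_eq_gramMatrix (i j : ℕ) (hl : 2 * l ≤ n) :
    T n (2 * l) i j =
      ω (2 * l) * ω (2 * n - 2 * l) / Real.pi ^ n * ((2 * l).factorial ^ 2 / n.factorial) *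
        gramMatrix (Finset.range (l + 1)) (tasakiWeight n l) (tasakiBasis n l) i j := by
  rw [T, gramMatrix_tasaki_eq_sum_Icc, Nat.mul_div_cancel_left l two_pos, Finset.mul_sum,
    Finset.mul_sum]
  refine Finset.sum_congr rfl fun r hr ↦ ?_
  obtain ⟨⟨hir, hjr⟩, hrl⟩ : (i ≤ r ∧ j ≤ r) ∧ r ≤ l := by
    simpa only [Finset.mem_Icc, max_le_iff] using hr
  have := Nat.doubleFactorial_pos (2 * n - 2 * r + 1)
  rw [tasakiBasis_eq_doubleFactorial hl hrl hir, tasakiBasis_eq_doubleFactorial hl hrl hjr,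
    tasakiWeight_eq_doubleFactorial hl hrl, pow_add]
  push_cast
  field_simp

end TasakiMatrix

theorem stmt16 (n l i j : ℕ) (hl : 2 * l ≤ n) (hi : i ≤ l) (hj : j ≤ l) :
    T n (2 * l) i j = T n (2 * l) (l - i) (l - j) := by
  rw [T_two_mul_eq_gramMatrix i j hl, T_two_mul_eq_gramMatrix (l - i) (l - j) hl]
  congr 1
  exact (bidiagonalSymm_tasaki n l).eq_reflect (bidiagonalSymm_tasaki_reflect hl)
    (gramMatrix_comm _ _ _) (offDiag_self _) (fun _ ↦ offDiag_ne_zero) hi hj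
end

section
/- For every integer n ≥ 4, the Tasaki matrix T^n_4 is given, with d := (n−4)!/(16·n!), by: T(n,4,0,0) = T(n,4,2,2) = 3(2n−5)(2n−3)·d; T(n,4,0,1) = T(n,4,1,0) = T(n,4,1,2) = T(n,4,2,1) = −3(2n−3)·d; T(n,4,0,2) = T(n,4,2,0) = 9·d; and T(n,4,1,1) = (2n²−4n+3)·d. -/
/-! Since `(2 * s - 1)‼ / (2 * s)! = 1 / (2 ^ s * s !)` and
`(2 * s + 1)‼ = (2 * s + 1)! / (2 ^ s * s !)`, the `r`-th summand of `T n k i j` is a product of a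
factor depending only on `r`, a factor depending on `(r, i)` and the same factor at `(r, j)`.
Normalizing the latter to `1` at `i = r` exhibits the Tasaki matrix as `Lᵀ D L` with `L` lower
unitriangular and `D` diagonal. Consecutive entries in a row of `L` have a simple rational ratio,
so for `k = 4` only three pivots and three entries below the diagonal have to be evaluated. -/

section

open scoped Nat

variable {n k r : ℕ}

lemma factorial_two_mul_eq_doubleFactorial (s : ℕ) : (2 * s)! = 2 ^ s * s ! * (2 * s - 1)‼ := by
  cases s with
  | zero => rfl
  | succ s =>
    rw [← Nat.doubleFactorial_two_mul]
    exact Nat.factorial_eq_mul_doubleFactorial (2 * s + 1)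

lemma factorial_two_mul_add_one_eq_doubleFactorial (s : ℕ) :
    (2 * s + 1)! = 2 ^ s * s ! * (2 * s + 1)‼ := by
  rw [Nat.factorial_eq_mul_doubleFactorial, Nat.doubleFactorial_two_mul, mul_comm]

lemma doubleFactorial_two_mul_add_one_eq_div (s : ℕ) :
    ((2 * s + 1)‼ : ℝ) = (2 * s + 1)! / (2 ^ s * s !) := by
  rw [eq_div_iff (by positivity), mul_comm]
  exact_mod_cast (factorial_two_mul_add_one_eq_doubleFactorial s).symm

lemma doubleFactorial_two_mul_sub_one_eq_div (s : ℕ) :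
    ((2 * s - 1)‼ : ℝ) = (2 * s)! / (2 ^ s * s !) := by
  rw [eq_div_iff (by positivity), mul_comm]
  exact_mod_cast (factorial_two_mul_eq_doubleFactorial s).symm

lemma ω_two_mul (p : ℕ) : ω (2 * p) = Real.pi ^ p / p ! := by
  rw [ω, Nat.cast_mul, Nat.cast_two, mul_div_cancel_left₀ _ two_ne_zero, Real.rpow_natCast,
    Real.Gamma_nat_eq_factorial]

lemma ω_mul_ω_div_pi_pow {p : ℕ} (hp : p ≤ n) :
    ω (2 * p) * ω (2 * n - 2 * p) / Real.pi ^ n = 1 / (p ! * (n - p)!) := by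
  obtain ⟨q, rfl⟩ := Nat.exists_eq_add_of_le hp
  rw [← Nat.mul_sub, Nat.add_sub_cancel_left, ω_two_mul, ω_two_mul, pow_add]
  have := Real.pi_ne_zero
  field_simp

lemma T_comm (n k i j : ℕ) : T n k i j = T n k j i := by
  rw [T, T, max_comm, add_comm i]
  congr 1
  refine Finset.sum_congr rfl fun r _ ↦ ?_
  push_cast
  ring

/-- The `r`-th diagonal entry of `D` in the factorization `Tⁿₖ = Lᵀ D L` of the Tasaki matrix,
with `L` lower unitriangular; meaningful for `2 * r ≤ k ≤ n`. -/
noncomputable def tasakiPivot (n k r : ℕ) : ℝ :=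
  ω k * ω (2 * n - k) / Real.pi ^ n *
    ((k - 2 * r)! * (n - 2 * r)! * (2 * n - 2 * r - k)! * (2 * n - 2 * r + 1)! /
      (n.choose (2 * r) * 16 ^ r * (2 * n - 4 * r)! * (2 * n - 4 * r + 1)!))

/-- The `(r, i)` entry of the lower unitriangular matrix `L` in the factorization `Tⁿₖ = Lᵀ D L`
of the Tasaki matrix, for `i ≤ r` and `2 * r ≤ k ≤ n`. Truncated subtraction does not make it vanish
for `r < i`, so sums over `r` have to start at the column index. -/
noncomputable def tasakiLower (n k r i : ℕ) : ℝ :=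
  (-1) ^ (i + r) * ((k - 2 * i)! * (n - r - i)! * (2 * n - 4 * r + 1)!) /
    ((k - 2 * r)! * (r - i)! * (n - 2 * r)! * (2 * n - 2 * r - 2 * i + 1)!)

lemma tasakiLower_self (n k r : ℕ) : tasakiLower n k r r = 1 := by
  have hn : n - r - r = n - 2 * r := by omega
  have hn' : 2 * n - 2 * r - 2 * r = 2 * n - 4 * r := by omega
  rw [tasakiLower, hn, hn', (Even.add_self r).neg_one_pow, Nat.sub_self, Nat.factorial_zero]
  field_simp
  norm_num

lemma tasakiLower_eq_mul_tasakiLower_succ {i : ℕ} (hir : i < r) (hrk : 2 * r ≤ k)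
    (hrn : 2 * r ≤ n) :
    tasakiLower n k r i =
      -(((k : ℝ) - 2 * i) * (k - 2 * i - 1)) / (2 * (r - i) * (2 * n - 2 * r - 2 * i + 1)) *
        tasakiLower n k r (i + 1) := by
  obtain ⟨s, rfl⟩ := Nat.exists_eq_add_of_lt hir
  obtain ⟨b, rfl⟩ := Nat.exists_eq_add_of_le hrk
  obtain ⟨a, rfl⟩ := Nat.exists_eq_add_of_le hrn
  have hk : 2 * (i + s + 1) + b - 2 * i = 2 * s + b + 2 := by omega
  have hk' : 2 * (i + s + 1) + b - 2 * (i + 1) = 2 * s + b := by omega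
  have hn : 2 * (i + s + 1) + a - (i + s + 1) - i = a + s + 1 := by omega
  have hn' : 2 * (i + s + 1) + a - (i + s + 1) - (i + 1) = a + s := by omega
  have hd : 2 * (2 * (i + s + 1) + a) - 2 * (i + s + 1) - 2 * i + 1 = 2 * (a + s) + 3 := by omega
  have hd' : 2 * (2 * (i + s + 1) + a) - 2 * (i + s + 1) - 2 * (i + 1) + 1 =
      2 * (a + s) + 1 := by omega
  have hr : i + s + 1 - i = s + 1 := by omega
  have hr' : i + s + 1 - (i + 1) = s := by omega
  have hden : (2 * (2 * (i + s + 1) + a) - 2 * (i + s + 1) - 2 * i + 1 : ℝ) =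
      2 * (a + s) + 3 := by ring
  rw [tasakiLower, tasakiLower, hk, hk', hn, hn', hd, hd', hr, hr']
  simp only [Nat.factorial_succ, pow_succ, add_right_comm i 1]
  push_cast
  rw [hden, show (i + s + 1 - i : ℝ) = s + 1 by ring]
  field_simp
  ring

lemma doubleFactorial_div_factorial_mul_doubleFactorial {i : ℕ} (hir : i ≤ r) (hrn : 2 * r ≤ n) :
    ((2 * r - 2 * i - 1)‼ : ℝ) / ((2 * r - 2 * i)! * (2 * n - 2 * r - 2 * i + 1)‼) =
      2 ^ (n - 2 * r) * (n - r - i)! / ((r - i)! * (2 * n - 2 * r - 2 * i + 1)!) := by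
  have hn : 2 * n - 2 * r - 2 * i = 2 * (n - r - i) := by omega
  have hpow : n - r - i = n - 2 * r + (r - i) := by omega
  rw [hn, ← Nat.mul_sub, doubleFactorial_two_mul_sub_one_eq_div,
    doubleFactorial_two_mul_add_one_eq_div, hpow, pow_add]
  field_simp

lemma factorial_mul_doubleFactorial_mul_doubleFactorial_div (hrn : 2 * r ≤ n) :
    ((n - r)! * (2 * n - 2 * r + 1)‼ * (2 * n - 4 * r + 1)‼ : ℝ) / (8 ^ r * (2 * n - 4 * r)!) =
      (2 * n - 2 * r + 1)! * (2 * n - 4 * r + 1)! /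
        (16 ^ r * (2 ^ (n - 2 * r)) ^ 2 * (n - 2 * r)! * (2 * n - 4 * r)!) := by
  have hn : 2 * n - 2 * r = 2 * (n - r) := by omega
  have hn' : 2 * n - 4 * r = 2 * (n - 2 * r) := by omega
  have hpow : n - r = n - 2 * r + r := by omega
  rw [hn, hn', doubleFactorial_two_mul_add_one_eq_div, doubleFactorial_two_mul_add_one_eq_div,
    show (16 : ℝ) = 8 * 2 by norm_num, mul_pow, hpow, pow_add]
  field_simp

theorem T_eq_sum_tasakiPivot_mul (hkn : k ≤ n) (i j : ℕ) :
    T n k i j = ∑ r ∈ Finset.Icc (max i j) (k / 2),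
      tasakiPivot n k r * tasakiLower n k r i * tasakiLower n k r j := by
  rw [T, Finset.mul_sum]
  refine Finset.sum_congr rfl fun r hr ↦ ?_
  obtain ⟨hmax, hrk⟩ := Finset.mem_Icc.mp hr
  obtain ⟨hir, hjr⟩ := max_le_iff.mp hmax
  have hrn : 2 * r ≤ n := by omega
  have hsign : (-1 : ℝ) ^ (i + j) = (-1) ^ (i + r) * (-1) ^ (j + r) := by
    rw [← pow_add, add_add_add_comm, pow_add _ (i + j), (Even.add_self r).neg_one_pow, mul_one]
  have hweight := factorial_mul_doubleFactorial_mul_doubleFactorial_div hrn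
  have hi := doubleFactorial_div_factorial_mul_doubleFactorial hir hrn
  have hj := doubleFactorial_div_factorial_mul_doubleFactorial hjr hrn
  calc
    _ = (-1 : ℝ) ^ (i + j) * (ω k * ω (2 * n - k) / Real.pi ^ n) *
        ((2 * n - 2 * r - k)! * (k - 2 * i)! * (k - 2 * j)! / (n.choose (2 * r) * (k - 2 * r)!)) *
        ((n - r)! * (2 * n - 2 * r + 1)‼ * (2 * n - 4 * r + 1)‼ / (8 ^ r * (2 * n - 4 * r)!)) *
        ((2 * r - 2 * i - 1)‼ / ((2 * r - 2 * i)! * (2 * n - 2 * r - 2 * i + 1)‼)) *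
        ((2 * r - 2 * j - 1)‼ / ((2 * r - 2 * j)! * (2 * n - 2 * r - 2 * j + 1)‼)) := by
      push_cast
      simp only [div_eq_mul_inv, mul_inv]
      ring
    _ = tasakiPivot n k r * tasakiLower n k r i * tasakiLower n k r j := by
      rw [hweight, hi, hj, hsign, tasakiPivot, tasakiLower, tasakiLower]
      field_simp

lemma tasakiPivot_two_mul {p : ℕ} (hp : p ≤ n) (r : ℕ) :
    tasakiPivot n (2 * p) r =
      (2 * p - 2 * r)! * (n - 2 * r)! * (2 * n - 2 * r - 2 * p)! * (2 * n - 2 * r + 1)! /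
        (p ! * (n - p)! * n.choose (2 * r) * 16 ^ r * (2 * n - 4 * r)! * (2 * n - 4 * r + 1)!) := by
  rw [tasakiPivot, ω_mul_ω_div_pi_pow hp]
  field_simp

lemma tasakiPivot_four_zero (hn : 4 ≤ n) :
    tasakiPivot n 4 0 =
      48 * n * (n - 1) * (n - 2) * (n - 3) / ((2 * n - 3) * (2 * n - 1)) *
        ((n - 4)! / (16 * n !)) := by
  obtain ⟨m, rfl⟩ := Nat.exists_eq_add_of_le' hn
  refine (tasakiPivot_two_mul (p := 2) (by omega) 0).trans ?_
  have h₃ : (2 * (m + 4) - 3 : ℝ) = 2 * m + 5 := by ring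
  have h₁ : (2 * (m + 4) - 1 : ℝ) = 2 * m + 7 := by ring
  simp only [mul_add, Nat.reduceMul, Nat.reduceSubDiff, Nat.add_sub_cancel, Nat.sub_zero, mul_zero,
    Nat.choose_zero_right, Nat.factorial_succ, Nat.factorial_zero]
  push_cast
  rw [h₃, h₁]
  field_simp
  ring

lemma tasakiPivot_four_one (hn : 4 ≤ n) :
    tasakiPivot n 4 1 =
      2 * (n - 1) * (n - 3) * (2 * n - 1) / (2 * n - 5) * ((n - 4)! / (16 * n !)) := by
  obtain ⟨m, rfl⟩ := Nat.exists_eq_add_of_le' hn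
  refine (tasakiPivot_two_mul (p := 2) (by omega) 1).trans ?_
  have h₅ : (2 * (m + 4) - 5 : ℝ) = 2 * m + 3 := by ring
  rw [Nat.cast_choose ℝ (by omega)]
  simp only [mul_add, Nat.reduceMul, Nat.reduceSubDiff, Nat.add_sub_cancel, mul_one,
    Nat.factorial_succ, Nat.factorial_zero]
  push_cast
  rw [h₅]
  field_simp
  ring

lemma tasakiPivot_four_two (hn : 4 ≤ n) :
    tasakiPivot n 4 2 = 3 * (2 * n - 5) * (2 * n - 3) * ((n - 4)! / (16 * n !)) := by
  obtain ⟨m, rfl⟩ := Nat.exists_eq_add_of_le' hn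
  refine (tasakiPivot_two_mul (p := 2) (by omega) 2).trans ?_
  rw [Nat.cast_choose ℝ (by omega)]
  simp only [mul_add, Nat.reduceMul, Nat.reduceSubDiff, Nat.add_sub_cancel,
    Nat.factorial_succ, Nat.factorial_zero]
  push_cast
  field_simp
  ring

lemma tasakiLower_four_one_zero (hn : 2 ≤ n) : tasakiLower n 4 1 0 = -6 / (2 * n - 1) := by
  rw [tasakiLower_eq_mul_tasakiLower_succ one_pos (by norm_num) hn, zero_add, tasakiLower_self]
  push_cast
  rw [show (2 * n - 2 * 1 - 2 * 0 + 1 : ℝ) = 2 * n - 1 by ring]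
  field_simp
  norm_num

lemma tasakiLower_four_two_one (hn : 4 ≤ n) : tasakiLower n 4 2 1 = -1 / (2 * n - 5) := by
  rw [tasakiLower_eq_mul_tasakiLower_succ one_lt_two (by norm_num) hn, one_add_one_eq_two,
    tasakiLower_self]
  push_cast
  rw [show (2 * n - 2 * 2 - 2 * 1 + 1 : ℝ) = 2 * n - 5 by ring]
  field_simp
  norm_num

lemma tasakiLower_four_two_zero (hn : 4 ≤ n) :
    tasakiLower n 4 2 0 = 3 / ((2 * n - 5) * (2 * n - 3)) := by
  rw [tasakiLower_eq_mul_tasakiLower_succ two_pos (by norm_num) hn, zero_add,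
    tasakiLower_four_two_one hn]
  push_cast
  rw [show (2 * n - 2 * 2 - 2 * 0 + 1 : ℝ) = 2 * n - 3 by ring]
  field_simp
  norm_num

lemma T_four_two (hn : 4 ≤ n) {i : ℕ} (hi : i ≤ 2) :
    T n 4 i 2 = tasakiPivot n 4 2 * tasakiLower n 4 2 i := by
  rw [T_eq_sum_tasakiPivot_mul hn, max_eq_right hi, show 4 / 2 = 2 from rfl, Finset.Icc_self,
    Finset.sum_singleton, tasakiLower_self, mul_one]

lemma T_four_one (hn : 4 ≤ n) {i : ℕ} (hi : i ≤ 1) :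
    T n 4 i 1 = tasakiPivot n 4 1 * tasakiLower n 4 1 i +
      tasakiPivot n 4 2 * tasakiLower n 4 2 i * tasakiLower n 4 2 1 := by
  rw [T_eq_sum_tasakiPivot_mul hn, max_eq_right hi, show 4 / 2 = 2 from rfl,
    Finset.sum_Icc_succ_top one_le_two, Finset.Icc_self, Finset.sum_singleton, tasakiLower_self,
    mul_one]

lemma two_mul_cast_sub_ne_zero {m : ℕ} {c : ℝ} (hmn : m ≤ n) (hc : c < 2 * m) :
    2 * (n : ℝ) - c ≠ 0 := by
  have hmn' : (m : ℝ) ≤ n := by exact_mod_cast hmn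
  linarith

lemma T_four_two_two (hn : 4 ≤ n) :
    T n 4 2 2 = 3 * (2 * n - 5) * (2 * n - 3) * ((n - 4)! / (16 * n !)) := by
  rw [T_four_two hn le_rfl, tasakiLower_self, tasakiPivot_four_two hn, mul_one]

lemma T_four_one_two (hn : 4 ≤ n) :
    T n 4 1 2 = -3 * (2 * n - 3) * ((n - 4)! / (16 * n !)) := by
  have h₅ := two_mul_cast_sub_ne_zero (c := 5) hn (by norm_num)
  rw [T_four_two hn one_le_two, tasakiPivot_four_two hn, tasakiLower_four_two_one hn]
  field_simp

lemma T_four_zero_two (hn : 4 ≤ n) : T n 4 0 2 = 9 * ((n - 4)! / (16 * n !)) := by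
  have h₃ := two_mul_cast_sub_ne_zero (c := 3) hn (by norm_num)
  have h₅ := two_mul_cast_sub_ne_zero (c := 5) hn (by norm_num)
  rw [T_four_two hn zero_le_two, tasakiPivot_four_two hn, tasakiLower_four_two_zero hn]
  field_simp
  norm_num

lemma T_four_one_one (hn : 4 ≤ n) :
    T n 4 1 1 = (2 * n ^ 2 - 4 * n + 3) * ((n - 4)! / (16 * n !)) := by
  have h₅ := two_mul_cast_sub_ne_zero (c := 5) hn (by norm_num)
  rw [T_four_one hn le_rfl, tasakiPivot_four_one hn, tasakiPivot_four_two hn, tasakiLower_self,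
    tasakiLower_four_two_one hn]
  field_simp
  ring

lemma T_four_zero_one (hn : 4 ≤ n) :
    T n 4 0 1 = -3 * (2 * n - 3) * ((n - 4)! / (16 * n !)) := by
  have h₁ := two_mul_cast_sub_ne_zero (c := 1) hn (by norm_num)
  have h₃ := two_mul_cast_sub_ne_zero (c := 3) hn (by norm_num)
  have h₅ := two_mul_cast_sub_ne_zero (c := 5) hn (by norm_num)
  rw [T_four_one hn zero_le_one, tasakiPivot_four_one hn, tasakiPivot_four_two hn,
    tasakiLower_four_one_zero (by omega), tasakiLower_four_two_zero hn,
    tasakiLower_four_two_one hn]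
  field_simp
  ring

lemma T_four_zero_zero (hn : 4 ≤ n) :
    T n 4 0 0 = 3 * (2 * n - 5) * (2 * n - 3) * ((n - 4)! / (16 * n !)) := by
  have h₁ := two_mul_cast_sub_ne_zero (c := 1) hn (by norm_num)
  have h₃ := two_mul_cast_sub_ne_zero (c := 3) hn (by norm_num)
  have h₅ := two_mul_cast_sub_ne_zero (c := 5) hn (by norm_num)
  -- Individually the terms `r = 1, 2` have a pole at `2 * n = 5`, which cancels in their sum.
  have htail : tasakiPivot n 4 1 * tasakiLower n 4 1 0 ^ 2 +
      tasakiPivot n 4 2 * tasakiLower n 4 2 0 ^ 2 =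
        9 * (8 * n ^ 2 - 24 * n + 15) / ((2 * n - 3) * (2 * n - 1)) * ((n - 4)! / (16 * n !)) := by
    rw [tasakiPivot_four_one hn, tasakiPivot_four_two hn, tasakiLower_four_one_zero (by omega),
      tasakiLower_four_two_zero hn]
    field_simp
    ring
  calc
    T n 4 0 0 = tasakiPivot n 4 0 + (tasakiPivot n 4 1 * tasakiLower n 4 1 0 ^ 2 +
        tasakiPivot n 4 2 * tasakiLower n 4 2 0 ^ 2) := by
      rw [T_eq_sum_tasakiPivot_mul hn, max_self, show 4 / 2 = 2 from rfl,
        Finset.sum_Icc_succ_top zero_le_two, Finset.sum_Icc_succ_top zero_le_one, Finset.Icc_self,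
        Finset.sum_singleton, tasakiLower_self]
      ring
    _ = 3 * (2 * n - 5) * (2 * n - 3) * ((n - 4)! / (16 * n !)) := by
      rw [htail, tasakiPivot_four_zero hn, ← add_mul, ← add_div]
      congr 1
      rw [div_eq_iff (mul_ne_zero h₃ h₁)]
      ring

end

theorem stmt19 (n : ℕ) (hn : 4 ≤ n) :
    T n 4 0 0 = 3 * (2 * (n : ℝ) - 5) * (2 * (n : ℝ) - 3) *
      (((n - 4).factorial : ℝ) / (16 * (n.factorial : ℝ))) ∧
    T n 4 2 2 = 3 * (2 * (n : ℝ) - 5) * (2 * (n : ℝ) - 3) *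
      (((n - 4).factorial : ℝ) / (16 * (n.factorial : ℝ))) ∧
    T n 4 0 1 = -3 * (2 * (n : ℝ) - 3) *
      (((n - 4).factorial : ℝ) / (16 * (n.factorial : ℝ))) ∧
    T n 4 1 0 = -3 * (2 * (n : ℝ) - 3) *
      (((n - 4).factorial : ℝ) / (16 * (n.factorial : ℝ))) ∧
    T n 4 1 2 = -3 * (2 * (n : ℝ) - 3) *
      (((n - 4).factorial : ℝ) / (16 * (n.factorial : ℝ))) ∧
    T n 4 2 1 = -3 * (2 * (n : ℝ) - 3) *
      (((n - 4).factorial : ℝ) / (16 * (n.factorial : ℝ))) ∧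
    T n 4 0 2 = 9 * (((n - 4).factorial : ℝ) / (16 * (n.factorial : ℝ))) ∧
    T n 4 2 0 = 9 * (((n - 4).factorial : ℝ) / (16 * (n.factorial : ℝ))) ∧
    T n 4 1 1 = (2 * (n : ℝ) ^ 2 - 4 * (n : ℝ) + 3) *
      (((n - 4).factorial : ℝ) / (16 * (n.factorial : ℝ))) :=
  ⟨T_four_zero_zero hn, T_four_two_two hn, T_four_zero_one hn,
    (T_comm n 4 1 0).trans (T_four_zero_one hn), T_four_one_two hn,
    (T_comm n 4 2 1).trans (T_four_one_two hn), T_four_zero_two hn,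
    (T_comm n 4 2 0).trans (T_four_zero_two hn), T_four_one_one hn⟩
end
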